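/- Let p be a point of an open set M ⊆ ℝ³ with coordinates (u¹,u²,u³), and let Ω = (Ω¹,Ω²,Ω³) be an ℝ³-valued 2-form on M whose components Ωⁱ = Σ_{j<k} Ωⁱ_{jk} du^j ∧ du^k have real-analytic coefficient functions Ωⁱ_{jk} = −Ωⁱ_{kj} : M → ℝ. Suppose (closedness) ∂₁Ωⁱ_{23} + ∂₂Ωⁱ_{31} + ∂₃Ωⁱ_{12} = 0 on M for each i, and (nondegeneracy) there is no nonzero vector v ∈ ℝ³ with v ⌟ Ω(p) = 0, i.e., for every v ≠ 0 there exist indices i, k with Σ_j Ωⁱ_{jk}(p) v_j ≠ 0. Then there exist an open neighborhood U ⊆ M of p, a real-analytic map x : U → ℝ³ whose Jacobian matrix Dx(u) is invertible for every u ∈ U, and a real-analytic map a : U → SO(3), such that the matrix-valued function W(u) = a(u)⁻¹ · Dx(u) satisfies ∂_j W_{ik} − ∂_k W_{ij} = Ωⁱ_{jk} on U for all i, j, k. (Equivalently: the 1-forms ωⁱ = Σ_j W_{ij} du^j form a coframing on U with dωⁱ = Ωⁱ, and the metric g = (ω¹)² + (ω²)² + (ω³)², being equal to ᵗdx ∘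 dx, is flat.) -/

import Mathlib

open Matrix

noncomputable section

/-- Partial derivative in the `j`-th coordinate direction. -/
def pd {m : ℕ} {F : Type*} [NormedAddCommGroup F] [NormedSpace ℝ F]
    (j : Fin m) (f : (Fin m → ℝ) → F) (u : Fin m → ℝ) : F :=
  fderiv ℝ f u (Pi.single j 1)

/-- The special orthogonal group SO(3), as a set of 3×3 real matrices. -/
def SO3 : Set (Matrix (Fin 3) (Fin 3) ℝ) :=
  {A | Aᵀ * A = 1 ∧ A.det = 1}

/-- The skew-symmetric matrix `[v]` associated to `v ∈ ℝ³`, with `[v] w = w × v`. -/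
def crossMat (v : Fin 3 → ℝ) : Matrix (Fin 3) (Fin 3) ℝ :=
  !![0, v 2, -(v 1); -(v 2), 0, v 0; v 1, -(v 0), 0]

/-- The Jacobian matrix of a map `x : ℝ³ → ℝ³`. -/
def jacobian (x : (Fin 3 → ℝ) → (Fin 3 → ℝ)) (u : Fin 3 → ℝ) :
    Matrix (Fin 3) (Fin 3) ℝ :=
  Matrix.of fun i j => pd j x u i

/-- `W(u) = a(u)⁻¹ · Dx(u)`, the coefficient matrix of the coframing `ω = a⁻¹ dx`. -/
def Wmat (a : (Fin 3 → ℝ) → Matrix (Fin 3) (Fin 3) ℝ)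
    (x : (Fin 3 → ℝ) → (Fin 3 → ℝ)) (u : Fin 3 → ℝ) : Matrix (Fin 3) (Fin 3) ℝ :=
  (a u)⁻¹ * jacobian x u

/-- The tableau `A_Q`: the span of the matrices `[x] + [y] Q`. -/
def tableau (Q : Matrix (Fin 3) (Fin 3) ℝ) : Submodule ℝ (Matrix (Fin 3) (Fin 3) ℝ) :=
  Submodule.span ℝ {M | ∃ x y : Fin 3 → ℝ, M = crossMat x + crossMat y * Q}

end



noncomputable section

namespace CKaux

open Filter Topology

/-- Multi-indices in three variables. -/
abbrev MIdx := Fin 3 → ℕ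

/-- The Banach space of absolutely summable families indexed by multi-indices. -/
abbrev L1 := lp (fun _ : MIdx => ℝ) 1

/-- The standard basis vectors. -/
def dl (α : MIdx) : L1 := lp.single 1 α (1 : ℝ)

lemma norm_dl (α : MIdx) : ‖dl α‖ = 1 := by
  unfold dl
  rw [lp.norm_single (by norm_num)]
  simp

lemma hasSum_dl (b : L1) : HasSum (fun α => b α • dl α) b := by
  have h := lp.hasSum_single (by norm_num : (1 : ENNReal) ≠ ⊤) b
  convert h using 2 with α
  unfold dl
  rw [← lp.single_smul]
  simp

lemma hasSum_norm_one (b : L1) : HasSum (fun α => ‖b α‖) ‖b‖ := by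
  have h := lp.hasSum_norm (by norm_num : 0 < (1 : ENNReal).toReal) b
  simpa using h

variable {E : Type*} [NormedAddCommGroup E] [NormedSpace ℝ E]

lemma clm_ext {S T : L1 →L[ℝ] E} (h : ∀ α, S (dl α) = T (dl α)) : S = T := by
  ext b
  have h1 := (hasSum_dl b).mapL S
  have h2 := (hasSum_dl b).mapL T
  refine h1.unique ?_
  convert h2 using 2 with α
  simp [h]

lemma exists_lam [CompleteSpace E] (v : MIdx → E) (C : ℝ) (hC : ∀ α, ‖v α‖ ≤ C) :
    ∃ T : L1 →L[ℝ] E, (∀ α, T (dl α) = v α) ∧ ‖T‖ ≤ C := by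
  have hC0 : 0 ≤ C := (norm_nonneg _).trans (hC 0)
  have hb : ∀ b : L1, Summable (fun α => ‖b α • v α‖) := by
    intro b
    refine Summable.of_nonneg_of_le (fun _ => norm_nonneg _) (fun α => ?_)
      ((hasSum_norm_one b).summable.mul_right C)
    rw [norm_smul]
    exact mul_le_mul_of_nonneg_left (hC α) (norm_nonneg _)
  let T0 : L1 →ₗ[ℝ] E :=
    { toFun := fun b => ∑' α, b α • v α
      map_add' := by
        intro b c
        rw [← (hb b).of_norm.tsum_add (hb c).of_norm]
        congr 1; ext α; simp [add_smul]
      map_smul' := by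
        intro r b
        simp only [RingHom.id_apply]
        rw [← (hb b).of_norm.tsum_const_smul]
        congr 1; ext α; simp [mul_smul] }
  have hT0 : ∀ b, ‖T0 b‖ ≤ C * ‖b‖ := by
    intro b
    refine (norm_tsum_le_tsum_norm (hb b)).trans ?_
    rw [← (hasSum_norm_one b).tsum_eq, mul_comm, ← tsum_mul_right]
    refine (hb b).tsum_le_tsum (fun α => ?_) ((hasSum_norm_one b).summable.mul_right C)
    rw [norm_smul]
    exact mul_le_mul_of_nonneg_left (hC α) (norm_nonneg _)
  refine ⟨T0.mkContinuous C hT0, fun α => ?_, T0.mkContinuous_norm_le hC0 hT0⟩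
  change ∑' β, (dl α : L1) β • v β = v α
  rw [tsum_eq_single α]
  · simp [dl]
  · intro β hβ
    simp [dl, hβ]

lemma norm_clm_le [CompleteSpace E] (T : L1 →L[ℝ] E) (C : ℝ) (h : ∀ α, ‖T (dl α)‖ ≤ C) :
    ‖T‖ ≤ C := by
  obtain ⟨S, hS, hn⟩ := exists_lam (fun α => T (dl α)) C h
  rwa [clm_ext (S := T) (T := S) (fun α => (hS α).symm)]

/-- Degree of a multi-index. -/
def deg (α : MIdx) : ℕ := α 0 + α 1 + α 2

/-- Monomials. -/
def mono (v : Fin 3 → ℝ) (α : MIdx) : ℝ := v 0 ^ α 0 * v 1 ^ α 1 * v 2 ^ α 2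

/-- A letter occurring in a multi-index. -/
def letter (α : MIdx) : Fin 3 := if α 0 ≠ 0 then 0 else if α 1 ≠ 0 then 1 else 2

/-- Remove that letter. -/
def drop (α : MIdx) : MIdx := α - Pi.single (letter α) 1

lemma deg_eq_zero {α : MIdx} : deg α = 0 ↔ α = 0 := by
  constructor
  · intro h
    unfold deg at h
    ext i; fin_cases i <;> simp <;> omega
  · rintro rfl; rfl

lemma deg_drop {α : MIdx} (h : α ≠ 0) : deg (drop α) + 1 = deg α := by
  have h0 : deg α ≠ 0 := fun h' => h (deg_eq_zero.1 h')
  unfold drop letter deg at *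
  split_ifs <;> simp <;> omega

lemma mono_drop (v : Fin 3 → ℝ) {α : MIdx} (h : α ≠ 0) :
    mono v α = v (letter α) * mono v (drop α) := by
  have h0 : deg α ≠ 0 := fun h' => h (deg_eq_zero.1 h')
  unfold drop letter deg mono at *
  split_ifs with h1 h2
  · simp
    obtain ⟨k, hk⟩ := Nat.exists_eq_succ_of_ne_zero h1
    rw [hk]; simp [pow_succ]; ring
  · simp
    obtain ⟨k, hk⟩ := Nat.exists_eq_succ_of_ne_zero h2
    rw [hk]; simp [pow_succ]; ring
  · simp
    obtain ⟨k, hk⟩ := Nat.exists_eq_succ_of_ne_zero (n := α 2) (by omega)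
    rw [hk]; simp [pow_succ]; ring

lemma exists_N : ∃ N : Fin 3 → (L1 →L[ℝ] L1), ∀ j α,
    N j (dl α) = if α ≠ 0 ∧ letter α = j then dl (drop α) else 0 := by
  have : ∀ j, ∃ T : L1 →L[ℝ] L1, ∀ α,
      T (dl α) = if α ≠ 0 ∧ letter α = j then dl (drop α) else 0 := by
    intro j
    obtain ⟨T, hT, -⟩ := exists_lam
      (fun α => if α ≠ 0 ∧ letter α = j then dl (drop α) else 0) 1 (by
        intro α; split_ifs
        · rw [norm_dl]
        · simp)
    exact ⟨T, hT⟩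
  choose N hN using this
  exact ⟨N, hN⟩

/-- Evaluation of power series, as an analytic family of functionals. -/
lemma exists_Ev : ∃ Ev : (Fin 3 → ℝ) → (L1 →L[ℝ] ℝ),
    AnalyticOnNhd ℝ Ev (Metric.ball 0 1) ∧
    ∀ v ∈ Metric.ball (0 : Fin 3 → ℝ) 1, ∀ α, Ev v (dl α) = mono v α := by
  obtain ⟨N, hN⟩ := exists_N
  obtain ⟨e0, he0, -⟩ := exists_lam (E := ℝ) (fun α => if α = 0 then 1 else 0) 1 (by
    intro α; split_ifs <;> simp)
  let S : (Fin 3 → ℝ) → (L1 →L[ℝ] L1) := fun v => ∑ j, v j • N j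
  have hS : ∀ v α, S v (dl α) = if α ≠ 0 then v (letter α) • dl (drop α) else 0 := by
    intro v α
    simp only [S, _root_.sum_apply, _root_.smul_apply, hN]
    by_cases h : α = 0
    · simp [h]
    · simp [h]
  have hSn : ∀ v, ‖S v‖ ≤ ‖v‖ := by
    intro v
    refine norm_clm_le _ _ (fun α => ?_)
    rw [hS]
    split_ifs
    · rw [norm_smul, norm_dl, mul_one]; exact norm_le_pi_norm v _
    · simp
  have hSa : AnalyticOnNhd ℝ S Set.univ := by
    intro v _
    have : S = fun v => (∑ j, (ContinuousLinearMap.proj (R := ℝ) (φ := fun _ : Fin 3 => ℝ)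
        j).smulRight (N j)) v := by
      ext1 v
      simp [S]
    rw [this]
    exact ContinuousLinearMap.analyticAt _ _
  have hunit : ∀ v ∈ Metric.ball (0 : Fin 3 → ℝ) 1, IsUnit (1 - S v) := by
    intro v hv
    apply isUnit_one_sub_of_norm_lt_one
    refine (hSn v).trans_lt ?_
    simpa using hv
  refine ⟨fun v => e0.comp (Ring.inverse (1 - S v)), ?_, ?_⟩
  · intro v hv
    obtain ⟨z, hz⟩ := hunit v hv
    have h1 : AnalyticAt ℝ (fun v => 1 - S v) v := analyticAt_const.sub (hSa v trivial)
    have h2 : AnalyticAt ℝ (fun v => Ring.inverse (1 - S v)) v :=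
      AnalyticAt.fun_comp (g := Ring.inverse) (by rw [← hz]; exact analyticAt_inverse z) h1
    exact (ContinuousLinearMap.analyticAt (ContinuousLinearMap.compL ℝ L1 L1 ℝ e0) _).fun_comp h2
  · intro v hv
    have key : ∀ b, e0.comp (Ring.inverse (1 - S v)) (b - S v b) = e0 b := by
      intro b
      have := Ring.inverse_mul_cancel _ (hunit v hv)
      have h2 := congrArg (fun T : L1 →L[ℝ] L1 => e0 (T b)) this
      simpa using h2
    intro α
    induction hn : deg α generalizing α with
    | zero =>
      have := deg_eq_zero.1 hn
      subst this
      have := key (dl 0)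
      rw [hS, he0] at this
      simpa [mono] using this
    | succ n ih =>
      have h0 : α ≠ 0 := by
        intro h; rw [deg_eq_zero.2 h] at hn; omega
      have h1 := ih (drop α) (by have := deg_drop h0; omega)
      have h2 := key (dl α)
      rw [hS, he0, if_pos h0, if_neg h0, map_sub, map_smul, h1] at h2
      rw [mono_drop v h0]
      simp only [smul_eq_mul] at h2
      linarith

/-- Evaluation functional. -/
def Ev : (Fin 3 → ℝ) → (L1 →L[ℝ] ℝ) := exists_Ev.choose

lemma Ev_an : AnalyticOnNhd ℝ Ev (Metric.ball 0 1) := exists_Ev.choose_spec.1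

lemma Ev_dl {v : Fin 3 → ℝ} (hv : v ∈ Metric.ball (0 : Fin 3 → ℝ) 1) (α : MIdx) :
    Ev v (dl α) = mono v α := exists_Ev.choose_spec.2 v hv α

end CKaux

end


noncomputable section

namespace CKaux

open Filter Topology

/-- The multi-index counting the letters of a word. -/
def cnt {n : ℕ} (w : Fin n → Fin 3) : MIdx := fun i => (Finset.univ.filter (fun k => w k = i)).card

lemma mono_cnt {n : ℕ} (w : Fin n → Fin 3) (v : Fin 3 → ℝ) :
    mono v (cnt w) = ∏ k, v (w k) := by
  rw [← Finset.prod_fiberwise' Finset.univ w v, Fin.prod_univ_three]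
  simp [mono, cnt]

lemma exists_rep {f : (Fin 3 → ℝ) → ℝ} {p : Fin 3 → ℝ} (hf : AnalyticAt ℝ f p) :
    ∃ r : ℝ, 0 < r ∧ ∃ b : L1, ∀ᶠ u in 𝓝 p, f u = Ev (r⁻¹ • (u - p)) b := by
  obtain ⟨P, R, hP⟩ := hf
  obtain ⟨r0, hr0, hr0R⟩ := ENNReal.lt_iff_exists_nnreal_btwn.1 hP.r_pos
  have hr0' : (0 : ℝ) < r0 := by exact_mod_cast hr0
  obtain ⟨C, hC, hCb⟩ := P.norm_mul_pow_le_of_lt_radius (hr0R.trans_le hP.r_le)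
  set r : ℝ := r0 / 6 with hr
  have hrpos : 0 < r := by positivity
  let e : Fin 3 → (Fin 3 → ℝ) := fun i => Pi.single i 1
  let g : (Σ n : ℕ, (Fin n → Fin 3)) → L1 := fun s =>
    ((P s.1 (fun k => e (s.2 k))) * r ^ s.1) • dl (cnt s.2)
  have hgn : ∀ n (w : Fin n → Fin 3), ‖g ⟨n, w⟩‖ ≤ C * (1 / 6) ^ n := by
    intro n w
    simp only [g]
    rw [norm_smul, norm_dl, mul_one, norm_mul]
    have h1 : ‖P n (fun k => e (w k))‖ ≤ ‖P n‖ := by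
      refine ((P n).le_opNorm _).trans ?_
      have : ∏ k, ‖e (w k)‖ = 1 := Finset.prod_eq_one (fun k _ => by simp only [e]; rw [Pi.norm_single]; simp)
      rw [this, mul_one]
    have h2 : ‖r ^ n‖ = (r0 : ℝ) ^ n * (1 / 6) ^ n := by
      rw [Real.norm_of_nonneg (by positivity), ← mul_pow, hr]; congr 1; ring
    rw [h2, ← mul_assoc]
    gcongr
    exact (mul_le_mul_of_nonneg_right h1 (by positivity)).trans (hCb n)
  have hgs : Summable (fun s => ‖g s‖) := by
    rw [summable_sigma_of_nonneg (fun _ => norm_nonneg _)]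
    refine ⟨fun n => (hasSum_fintype _).summable, ?_⟩
    refine Summable.of_nonneg_of_le (fun n => tsum_nonneg (fun _ => norm_nonneg _)) (fun n => ?_)
      ((summable_geometric_of_lt_one (by norm_num) (by norm_num : (1 / 2 : ℝ) < 1)).mul_left C)
    rw [tsum_fintype]
    refine (Finset.sum_le_sum (fun w _ => hgn n w)).trans ?_
    simp only [Finset.sum_const, Finset.card_univ, Fintype.card_fun, Fintype.card_fin, nsmul_eq_mul]
    push_cast
    rw [mul_left_comm, ← mul_pow]
    norm_num
  have hb := hgs.of_norm.hasSum
  refine ⟨r, hrpos, ∑' s, g s, ?_⟩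
  filter_upwards [Metric.ball_mem_nhds p hrpos] with u hu
  have hv : r⁻¹ • (u - p) ∈ Metric.ball (0 : Fin 3 → ℝ) 1 := by
    rw [mem_ball_zero_iff, norm_smul, norm_inv, Real.norm_of_nonneg hrpos.le, inv_mul_lt_iff₀ hrpos,
      mul_one, ← dist_eq_norm]
    exact hu
  have h1 := hb.mapL (Ev (r⁻¹ • (u - p)))
  have h2 := h1.sigma (fun n => hasSum_fintype _)
  have hu' : u - p ∈ Metric.eball (0 : Fin 3 → ℝ) R := by
    rw [Metric.mem_eball, edist_zero_right]
    refine lt_trans ?_ hr0R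
    rw [← ofReal_norm, ← ENNReal.ofReal_coe_nnreal]
    rw [ENNReal.ofReal_lt_ofReal_iff hr0', ← dist_eq_norm]
    refine (Metric.mem_ball.1 hu).trans ?_
    rw [hr]; linarith
  have h3 := hP.hasSum hu'
  rw [add_sub_cancel] at h3
  have key : (fun n => P n fun _ => u - p) =
      fun n => ∑ w, (Ev (r⁻¹ • (u - p))) (g ⟨n, w⟩) := ?_
  · rw [key] at h3
    exact h3.unique h2
  ext1 n
  have h4 : (fun _ : Fin n => u - p) = fun _ => ∑ i, (u - p) i • e i := by
    ext _ i
    simp [e, Pi.single_apply, Finset.sum_apply]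
  rw [h4, ContinuousMultilinearMap.map_sum]
  refine Finset.sum_congr rfl (fun w _ => ?_)
  rw [ContinuousMultilinearMap.map_smul_univ]
  simp only [g, map_smul, Ev_dl hv, mono_cnt, smul_eq_mul, Pi.smul_apply]
  rw [Finset.prod_mul_distrib]
  simp only [Finset.prod_const, Finset.card_univ, Fintype.card_fin]
  rw [inv_pow]
  field_simp

end CKaux

end


noncomputable section

namespace CKaux

open Filter Topology

/-- unit multi-index -/
def ei (j : Fin 3) : MIdx := Pi.single j 1

lemma ei_same (j : Fin 3) : ei j j = 1 := by simp [ei]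
lemma ei_ne {j k : Fin 3} (h : k ≠ j) : ei j k = 0 := by simp [ei, h]

lemma deg_add (α β : MIdx) : deg (α + β) = deg α + deg β := by simp [deg]; ring
lemma deg_ei (j : Fin 3) : deg (ei j) = 1 := by fin_cases j <;> simp [deg, ei]
lemma mono_add (v : Fin 3 → ℝ) (α β : MIdx) : mono v (α + β) = mono v α * mono v β := by
  simp [mono, pow_add]; ring
lemma mono_ei (v : Fin 3 → ℝ) (j : Fin 3) : mono v (ei j) = v j := by
  fin_cases j <;> simp [mono, ei]
lemma mono_smul (r : ℝ) (v : Fin 3 → ℝ) (α : MIdx) : mono (r • v) α = r ^ deg α * mono v α := by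
  simp [mono, deg, mul_pow, pow_add]; ring
lemma le_deg (α : MIdx) (j : Fin 3) : α j ≤ deg α := by
  fin_cases j <;> simp [deg] <;> omega
lemma add_le_deg (α : MIdx) {j k : Fin 3} (h : j ≠ k) : α j + α k ≤ deg α := by
  fin_cases j <;> fin_cases k <;> simp [deg] at h ⊢ <;> omega

/-- binomial weight -/
def bc (τ : Fin 3) (α : MIdx) : ℝ := (Nat.choose (deg α) (α τ) : ℝ)

lemma bc_pos (τ : Fin 3) (α : MIdx) : 0 < bc τ α := by
  unfold bc; exact_mod_cast Nat.choose_pos (le_deg α τ)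

lemma one_le_bc (τ : Fin 3) (α : MIdx) : 1 ≤ bc τ α := by
  unfold bc; exact_mod_cast Nat.choose_pos (le_deg α τ)

lemma bc_le (τ : Fin 3) (α : MIdx) : bc τ α ≤ 2 ^ deg α := by
  unfold bc; exact_mod_cast Nat.choose_le_two_pow _ _

lemma bc_mul_le (τ : Fin 3) (α β : MIdx) : bc τ α * bc τ β ≤ bc τ (α + β) := by
  unfold bc
  rw [deg_add, Pi.add_apply, Nat.add_choose_eq]
  push_cast
  refine Finset.single_le_sum (f := fun x : ℕ × ℕ => ((deg α).choose x.1 : ℝ) *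
    ((deg β).choose x.2 : ℝ)) (fun _ _ => by positivity) (a := (α τ, β τ)) ?_
  simp

lemma exists_mul (τ : Fin 3) : ∃ M : L1 →L[ℝ] L1 →L[ℝ] L1, ∀ α β,
    M (dl α) (dl β) = (bc τ α * bc τ β / bc τ (α + β)) • dl (α + β) := by
  have h : ∀ α, ∃ T : L1 →L[ℝ] L1,
      (∀ β, T (dl β) = (bc τ α * bc τ β / bc τ (α + β)) • dl (α + β)) ∧ ‖T‖ ≤ 1 := by
    intro α
    refine exists_lam _ 1 (fun β => ?_)
    rw [norm_smul, norm_dl, mul_one, Real.norm_of_nonneg]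
    · exact div_le_one_of_le₀ (bc_mul_le τ α β) (bc_pos _ _).le
    · have := bc_pos τ α; have := bc_pos τ β; have := bc_pos τ (α + β); positivity
  choose T hT hTn using h
  obtain ⟨M, hM, -⟩ := exists_lam T 1 hTn
  exact ⟨M, fun α β => by rw [hM, hT]⟩

/-- the product -/
def Mu (τ : Fin 3) : L1 →L[ℝ] L1 →L[ℝ] L1 := (exists_mul τ).choose
lemma Mu_dl (τ : Fin 3) (α β : MIdx) : Mu τ (dl α) (dl β) =
    (bc τ α * bc τ β / bc τ (α + β)) • dl (α + β) := (exists_mul τ).choose_spec α β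

lemma exists_In (τ : Fin 3) : ∃ T : L1 →L[ℝ] L1, ∀ α,
    T (dl α) = (1 / ((deg α : ℝ) + 1)) • dl (α + ei τ) := by
  obtain ⟨T, hT, -⟩ := exists_lam (fun α => (1 / ((deg α : ℝ) + 1)) • dl (α + ei τ)) 1 (fun α => by
    rw [norm_smul, norm_dl, mul_one, Real.norm_of_nonneg (by positivity)]
    exact div_le_one_of_le₀ (by linarith [(Nat.cast_nonneg (deg α) : (0 : ℝ) ≤ _)]) (by positivity))
  exact ⟨T, hT⟩

/-- normalized integration -/
def In (τ : Fin 3) : L1 →L[ℝ] L1 := (exists_In τ).choose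
lemma In_dl (τ : Fin 3) (α : MIdx) :
    In τ (dl α) = (1 / ((deg α : ℝ) + 1)) • dl (α + ei τ) := (exists_In τ).choose_spec α

lemma exists_Di (τ j : Fin 3) (h : j ≠ τ) : ∃ T : L1 →L[ℝ] L1, ∀ α,
    T (dl α) = ((α j : ℝ) / ((deg α : ℝ) - α τ)) • dl (α + ei τ - ei j) := by
  obtain ⟨T, hT, -⟩ := exists_lam
      (fun α => ((α j : ℝ) / ((deg α : ℝ) - α τ)) • dl (α + ei τ - ei j)) 1 (fun α => by
    have h1 : (α j : ℝ) + α τ ≤ deg α := by exact_mod_cast add_le_deg α h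
    have h2 : (0 : ℝ) ≤ α j := by positivity
    rw [norm_smul, norm_dl, mul_one, Real.norm_of_nonneg (div_nonneg h2 (by linarith))]
    exact div_le_one_of_le₀ (by linarith) (by linarith))
  exact ⟨T, hT⟩

lemma exists_Di' (τ : Fin 3) : ∃ T : Fin 3 → (L1 →L[ℝ] L1), ∀ j, j ≠ τ → ∀ α,
    T j (dl α) = ((α j : ℝ) / ((deg α : ℝ) - α τ)) • dl (α + ei τ - ei j) := by
  have : ∀ j, ∃ T : L1 →L[ℝ] L1, j ≠ τ → ∀ α,
    T (dl α) = ((α j : ℝ) / ((deg α : ℝ) - α τ)) • dl (α + ei τ - ei j) := by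
    intro j
    by_cases h : j = τ
    · exact ⟨0, fun h' => absurd h h'⟩
    · obtain ⟨T, hT⟩ := exists_Di τ j h
      exact ⟨T, fun _ => hT⟩
  choose T hT using this
  exact ⟨T, hT⟩

/-- normalized integration followed by a derivative -/
def Di (τ : Fin 3) : Fin 3 → (L1 →L[ℝ] L1) := (exists_Di' τ).choose
lemma Di_dl (τ j : Fin 3) (h : j ≠ τ) (α : MIdx) :
    Di τ j (dl α) = ((α j : ℝ) / ((deg α : ℝ) - α τ)) • dl (α + ei τ - ei j) :=
  (exists_Di' τ).choose_spec j h α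

/-- the weights -/
def wt (τ : Fin 3) (l : ℝ) (α : MIdx) : ℝ := l ^ (deg α + α τ) / bc τ α

lemma wt_pos (τ : Fin 3) {l : ℝ} (hl : 0 < l) (α : MIdx) : 0 < wt τ l α := by
  have := bc_pos τ α
  unfold wt; positivity

lemma exists_ev (τ : Fin 3) (p : Fin 3 → ℝ) {l : ℝ} (hl : 0 < l) (hl1 : l ≤ 1) :
    ∃ ev : (Fin 3 → ℝ) → (L1 →L[ℝ] ℝ), AnalyticOnNhd ℝ ev (Metric.ball p (l ^ 2 / 2)) ∧
      ∀ u ∈ Metric.ball p (l ^ 2 / 2), ∀ α, ev u (dl α) = mono (u - p) α / wt τ l α := by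
  set r : ℝ := l ^ 2 / 2 with hr
  have hrpos : 0 < r := by positivity
  obtain ⟨Dg, hDg, -⟩ := exists_lam (fun α => (r ^ deg α / wt τ l α) • dl α) 1 (fun α => by
    have h1 := wt_pos τ hl α
    have h2 := bc_pos τ α
    rw [norm_smul, norm_dl, mul_one, Real.norm_of_nonneg (by positivity)]
    apply div_le_one_of_le₀ _ h1.le
    unfold wt
    rw [le_div_iff₀ h2]
    calc r ^ deg α * bc τ α ≤ r ^ deg α * 2 ^ deg α := by gcongr; exact bc_le _ _
      _ = l ^ (deg α + deg α) := by rw [← mul_pow, hr, ← two_mul, pow_mul]; congr 1; ring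
      _ ≤ l ^ (deg α + α τ) := pow_le_pow_of_le_one hl.le hl1 (by have := le_deg α τ; omega))
  have hball : ∀ u ∈ Metric.ball p r, r⁻¹ • (u - p) ∈ Metric.ball (0 : Fin 3 → ℝ) 1 := by
    intro u hu
    rw [mem_ball_zero_iff, norm_smul, norm_inv, Real.norm_of_nonneg hrpos.le, inv_mul_lt_iff₀ hrpos,
      mul_one, ← dist_eq_norm]
    exact hu
  refine ⟨fun u => (Ev (r⁻¹ • (u - p))).comp Dg, ?_, ?_⟩
  · intro u hu
    have h1 : AnalyticAt ℝ (fun u : Fin 3 → ℝ => r⁻¹ • (u - p)) u := by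
      have h0 : AnalyticAt ℝ (fun u : Fin 3 → ℝ => u - p) u := analyticAt_id.sub analyticAt_const
      exact ((r⁻¹ • ContinuousLinearMap.id ℝ (Fin 3 → ℝ)).analyticAt _).fun_comp h0
    have h2 : AnalyticAt ℝ (fun u => Ev (r⁻¹ • (u - p))) u :=
      AnalyticAt.fun_comp (g := Ev) (Ev_an _ (hball u hu)) h1
    exact (((ContinuousLinearMap.compL ℝ L1 L1 ℝ).flip Dg).analyticAt _).fun_comp h2
  · intro u hu α
    rw [ContinuousLinearMap.comp_apply, hDg, map_smul, Ev_dl (hball u hu), mono_smul, smul_eq_mul]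
    rw [inv_pow]
    field_simp

lemma enc_exists (τ : Fin 3) (p : Fin 3 → ℝ) {f : (Fin 3 → ℝ) → ℝ} (hf : AnalyticAt ℝ f p) :
    ∃ enc : ℝ → L1, Tendsto enc (𝓝[>] 0) (𝓝 (f p • dl 0)) ∧
      ∀ᶠ l in 𝓝[>] (0 : ℝ), ∀ ev : (Fin 3 → ℝ) → (L1 →L[ℝ] ℝ),
        (∀ u ∈ Metric.ball p (l ^ 2 / 2), ∀ α, ev u (dl α) = mono (u - p) α / wt τ l α) →
        ∀ᶠ u in 𝓝 p, f u = ev u (enc l) := by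
  obtain ⟨r, hr, b, hb⟩ := exists_rep hf
  have hex : ∀ l : ℝ, ∃ T : L1 →L[ℝ] L1, 0 < l → l ≤ 1 → l ≤ r →
      (∀ α, T (dl α) = (wt τ l α / r ^ deg α) • dl α) := by
    intro l
    by_cases h : 0 < l ∧ l ≤ 1 ∧ l ≤ r
    · obtain ⟨h0, h1, h2⟩ := h
      obtain ⟨T, hT, -⟩ := exists_lam (fun α => (wt τ l α / r ^ deg α) • dl α) 1 (fun α => by
        have h3 := wt_pos τ h0 α
        rw [norm_smul, norm_dl, mul_one, Real.norm_of_nonneg (by positivity)]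
        apply div_le_one_of_le₀ _ (by positivity)
        unfold wt
        refine (div_le_self (by positivity) (one_le_bc _ _)).trans ?_
        exact (pow_le_pow_of_le_one h0.le h1 (Nat.le_add_right _ _)).trans
          (pow_le_pow_left₀ h0.le h2 _))
      exact ⟨T, fun _ _ _ => hT⟩
    · exact ⟨0, fun h0 h1 h2 => absurd ⟨h0, h1, h2⟩ h⟩
  choose T hT using hex
  obtain ⟨P0, hP0, -⟩ := exists_lam (fun α => if α = 0 then dl 0 else 0) 1 (fun α => by
    split_ifs
    · rw [norm_dl]
    · simp)
  have hev : ∀ᶠ l in 𝓝[>] (0 : ℝ), 0 < l ∧ l ≤ 1 ∧ l ≤ r := by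
    have h1 : ∀ᶠ l in 𝓝[>] (0 : ℝ), l ≤ 1 :=
      eventually_nhdsWithin_of_eventually_nhds (eventually_le_nhds (by norm_num))
    have h2 : ∀ᶠ l in 𝓝[>] (0 : ℝ), l ≤ r :=
      eventually_nhdsWithin_of_eventually_nhds (eventually_le_nhds hr)
    filter_upwards [h1, h2, self_mem_nhdsWithin] with l h1 h2 h3 using ⟨h3, h1, h2⟩
  have hball : ∀ᶠ u in 𝓝 p, r⁻¹ • (u - p) ∈ Metric.ball (0 : Fin 3 → ℝ) 1 := by
    filter_upwards [Metric.ball_mem_nhds p hr] with u hu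
    rw [mem_ball_zero_iff, norm_smul, norm_inv, Real.norm_of_nonneg hr.le, inv_mul_lt_iff₀ hr,
      mul_one, ← dist_eq_norm]
    exact hu
  refine ⟨fun l => T l b, ?_, ?_⟩
  · have hP0b : P0 b = f p • dl 0 := by
      have h1 : f p = Ev 0 b := by simpa using hb.self_of_nhds
      have h2 : (Ev 0).smulRight (dl 0) = P0 := by
        apply clm_ext
        intro α
        rw [hP0, ContinuousLinearMap.smulRight_apply, Ev_dl (by simp)]
        split_ifs with h
        · simp [h, mono]
        · have : mono 0 α = 0 := by
            rw [mono_drop _ h]; simp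
          simp [this]
      rw [h1, ← h2]; rfl
    rw [← hP0b]
    have hT0 : Tendsto T (𝓝[>] 0) (𝓝 P0) := by
      rw [tendsto_iff_norm_sub_tendsto_zero]
      have hlim : Tendsto (fun l : ℝ => l / r) (𝓝[>] 0) (𝓝 0) := by
        have : Tendsto (fun l : ℝ => l / r) (𝓝 0) (𝓝 (0 / r)) := tendsto_id.div_const r
        rw [zero_div] at this
        exact this.mono_left nhdsWithin_le_nhds
      refine squeeze_zero' (Eventually.of_forall fun _ => norm_nonneg _) ?_ hlim
      filter_upwards [hev] with l ⟨h0, h1, h2⟩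
      refine norm_clm_le _ _ (fun α => ?_)
      rw [_root_.sub_apply, hT l h0 h1 h2, hP0]
      split_ifs with h
      · subst h
        have : wt τ l 0 = 1 := by simp [wt, deg, bc]
        rw [this]
        simp [deg]; positivity
      · have h3 := wt_pos τ h0 α
        rw [sub_zero, norm_smul, norm_dl, mul_one, Real.norm_of_nonneg (by positivity)]
        have h4 : wt τ l α ≤ l ^ deg α := by
          unfold wt
          refine (div_le_self (by positivity) (one_le_bc _ _)).trans ?_
          exact (pow_le_pow_of_le_one h0.le h1 (Nat.le_add_right _ _))
        calc wt τ l α / r ^ deg α ≤ l ^ deg α / r ^ deg α := by gcongr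
          _ = (l / r) ^ deg α := by rw [div_pow]
          _ ≤ (l / r) ^ 1 := pow_le_pow_of_le_one (by positivity) (div_le_one_of_le₀ h2 hr.le)
              (by have : deg α ≠ 0 := fun h' => h (deg_eq_zero.1 h')
                  omega)
          _ = l / r := pow_one _
    exact ((ContinuousLinearMap.apply ℝ L1 b).continuous.tendsto P0).comp hT0
  · filter_upwards [hev] with l ⟨h0, h1, h2⟩ ev hevd
    filter_upwards [hb, hball, Metric.ball_mem_nhds p (by positivity : 0 < l ^ 2 / 2)]
      with u hu1 hu2 hu3
    rw [hu1]
    have : Ev (r⁻¹ • (u - p)) = (ev u).comp (T l) := by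
      apply clm_ext
      intro α
      have h3 := wt_pos τ h0 α
      rw [Ev_dl hu2, ContinuousLinearMap.comp_apply, hT l h0 h1 h2, map_smul, hevd u hu3,
        mono_smul, smul_eq_mul, inv_pow]
      field_simp
    rw [this]; rfl

end CKaux

end


noncomputable section

namespace CKaux

open Filter Topology

lemma pd_eq_of_line {f : (Fin 3 → ℝ) → ℝ} {u : Fin 3 → ℝ} {j : Fin 3} {d : ℝ}
    (hf : DifferentiableAt ℝ f u)
    (h : HasDerivAt (fun s : ℝ => f (u + s • Pi.single j (1 : ℝ))) d 0) : pd j f u = d := by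
  unfold pd
  rw [← hf.lineDeriv_eq_fderiv]
  exact h.deriv

lemma analyticAt_mono (p : Fin 3 → ℝ) (α : MIdx) (u : Fin 3 → ℝ) :
    AnalyticAt ℝ (fun u => mono (u - p) α) u := by
  have h : ∀ i, AnalyticAt ℝ (fun u : Fin 3 → ℝ => u i - p i) u := fun i =>
    ((ContinuousLinearMap.proj (R := ℝ) (φ := fun _ : Fin 3 => ℝ) i).analyticAt u).sub
      analyticAt_const
  exact (((h 0).pow _).mul ((h 1).pow _)).mul ((h 2).pow _)

lemma pd_mono (p : Fin 3 → ℝ) (α : MIdx) (u : Fin 3 → ℝ) (j : Fin 3) :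
    pd j (fun u => mono (u - p) α) u = α j * mono (u - p) (α - ei j) := by
  apply pd_eq_of_line (analyticAt_mono p α u).differentiableAt
  have hx : ∀ (x : ℝ) (n : ℕ), HasDerivAt (fun s : ℝ => (x + s) ^ n) (n * x ^ (n - 1)) 0 := by
    intro x n
    have := ((hasDerivAt_id (0 : ℝ)).const_add x).pow n
    have h2 := this.congr_deriv (f' := _) (g' := n * x ^ (n - 1)) (by simp)
    exact h2.congr_of_eventuallyEq (Eventually.of_forall fun s => by simp)
  fin_cases j
  · have := ((hx (u 0 - p 0) (α 0)).mul_const ((u 1 - p 1) ^ α 1)).mul_const ((u 2 - p 2) ^ α 2)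
    refine (this.congr_deriv ?_).congr_of_eventuallyEq (Eventually.of_forall fun s => ?_)
    · simp [mono, ei]; ring
    · simp [mono]; left; left; congr 1; ring
  · have := ((hx (u 1 - p 1) (α 1)).const_mul ((u 0 - p 0) ^ α 0)).mul_const ((u 2 - p 2) ^ α 2)
    refine (this.congr_deriv ?_).congr_of_eventuallyEq (Eventually.of_forall fun s => ?_)
    · simp [mono, ei]; ring
    · simp [mono]; left; left; congr 1; ring
  · have := ((hx (u 2 - p 2) (α 2)).const_mul ((u 0 - p 0) ^ α 0 * (u 1 - p 1) ^ α 1))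
    refine (this.congr_deriv ?_).congr_of_eventuallyEq (Eventually.of_forall fun s => ?_)
    · simp [mono, ei]; ring
    · simp [mono]; left; congr 1; ring

/-- All properties of the evaluation functionals. -/
lemma exists_ev_full (τ : Fin 3) (p : Fin 3 → ℝ) {l : ℝ} (hl : 0 < l) (hl1 : l ≤ 1) :
    ∃ ev : (Fin 3 → ℝ) → (L1 →L[ℝ] ℝ),
      (∀ u ∈ Metric.ball p (l ^ 2 / 2), ∀ α, ev u (dl α) = mono (u - p) α / wt τ l α) ∧
      (∀ u ∈ Metric.ball p (l ^ 2 / 2), ∀ b, AnalyticAt ℝ (fun u => ev u b) u) ∧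
      (∀ u ∈ Metric.ball p (l ^ 2 / 2), ∀ b c, ev u (Mu τ b c) = ev u b * ev u c) ∧
      (∀ u ∈ Metric.ball p (l ^ 2 / 2), ev u (dl 0) = 1) ∧
      (∀ u ∈ Metric.ball p (l ^ 2 / 2), ∀ b, u τ = p τ → ev u (In τ b) = 0) ∧
      (∀ u ∈ Metric.ball p (l ^ 2 / 2), ∀ b, pd τ (fun u => ev u (l ^ 2 • In τ b)) u = ev u b) ∧
      (∀ u ∈ Metric.ball p (l ^ 2 / 2), ∀ b, ∀ j, j ≠ τ →
        pd j (fun u => ev u (l ^ 2 • In τ b)) u = ev u (l • Di τ j b)) := by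
  obtain ⟨ev, hev, hd⟩ := exists_ev τ p hl hl1
  have han : ∀ u ∈ Metric.ball p (l ^ 2 / 2), ∀ b, AnalyticAt ℝ (fun u => ev u b) u := by
    intro u hu b
    exact ((ContinuousLinearMap.apply ℝ ℝ b).analyticAt _).fun_comp (hev u hu)
  have hpd : ∀ u ∈ Metric.ball p (l ^ 2 / 2), ∀ b j, pd j (fun u => ev u b) u =
      fderiv ℝ ev u (Pi.single j 1) b := by
    intro u hu b j
    have h1 := (hev u hu).differentiableAt.hasFDerivAt
    have h2 := (ContinuousLinearMap.apply ℝ ℝ b).hasFDerivAt.comp u h1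
    unfold pd
    have : (fun u => ev u b) = ((ContinuousLinearMap.apply ℝ ℝ b) ∘ ev) := rfl
    rw [this, h2.fderiv]
    rfl
  have hpdl : ∀ u ∈ Metric.ball p (l ^ 2 / 2), ∀ α j, fderiv ℝ ev u (Pi.single j 1) (dl α) =
      α j * mono (u - p) (α - ei j) / wt τ l α := by
    intro u hu α j
    rw [← hpd u hu, ← pd_mono]
    unfold pd
    have : (fun u => ev u (dl α)) =ᶠ[𝓝 u] fun u => (wt τ l α)⁻¹ • mono (u - p) α := by
      filter_upwards [Metric.isOpen_ball.mem_nhds hu] with v hv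
      rw [hd v hv, smul_eq_mul, div_eq_inv_mul]
    rw [this.fderiv_eq, fderiv_fun_const_smul (analyticAt_mono p α u).differentiableAt]
    simp [div_eq_inv_mul]
  refine ⟨ev, hd, han, ?_, ?_, ?_, ?_, ?_⟩
  · intro u hu b c
    have h1 : ∀ α, (ev u).comp (Mu τ (dl α)) = (ev u (dl α)) • ev u := by
      intro α
      apply clm_ext
      intro β
      have := bc_pos τ α
      have := bc_pos τ β
      have := bc_pos τ (α + β)
      simp only [ContinuousLinearMap.comp_apply, _root_.smul_apply, Mu_dl, map_smul, hd u hu,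
        smul_eq_mul, mono_add, wt, deg_add, Pi.add_apply]
      field_simp
      ring
    have h2 : (ev u).comp ((Mu τ).flip c) = (ev u c) • ev u := by
      apply clm_ext
      intro α
      have := congrArg (fun T : L1 →L[ℝ] ℝ => T c) (h1 α)
      simpa [mul_comm] using this
    have := congrArg (fun T : L1 →L[ℝ] ℝ => T b) h2
    simpa [mul_comm] using this
  · intro u hu
    rw [hd u hu]
    simp [mono, wt, deg, bc]
  · intro u hu b h
    have h2 : (ev u).comp (In τ) = 0 := by
      apply clm_ext
      intro α
      rw [ContinuousLinearMap.comp_apply, In_dl, map_smul, hd u hu, mono_add, mono_ei]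
      simp [h]
    have := congrArg (fun T : L1 →L[ℝ] ℝ => T b) h2
    simpa using this
  · intro u hu b
    rw [hpd u hu]
    have h2 : (fderiv ℝ ev u (Pi.single τ 1)).comp (l ^ 2 • In τ) = ev u := by
      apply clm_ext
      intro α
      rw [ContinuousLinearMap.comp_apply, _root_.smul_apply, In_dl, map_smul, map_smul, hpdl u hu,
        hd u hu, add_tsub_cancel_right]
      have h1 := bc_pos τ α
      have h1' := bc_pos τ (α + ei τ)
      have h3 : ((deg α : ℝ) + 1) * bc τ α = bc τ (α + ei τ) * (α τ + 1) := by
        unfold bc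
        rw [deg_add, deg_ei, Pi.add_apply, ei_same]
        exact_mod_cast Nat.add_one_mul_choose_eq (deg α) (α τ)
      have h4 : (0 : ℝ) < (deg α : ℝ) + 1 := by positivity
      simp only [smul_eq_mul, wt, deg_add, deg_ei, Pi.add_apply, ei_same]
      push_cast
      have h5 : l ^ (deg α + 1 + (α τ + 1)) = l ^ (deg α + α τ) * l ^ 2 := by ring
      rw [h5]
      field_simp
      linear_combination (-mono (u - p) α) * h3
    have := congrArg (fun T : L1 →L[ℝ] ℝ => T b) h2
    simpa using this
  · intro u hu b j hj
    rw [hpd u hu]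
    have h2 : (fderiv ℝ ev u (Pi.single j 1)).comp (l ^ 2 • In τ) = (ev u).comp (l • Di τ j) := by
      apply clm_ext
      intro α
      rw [ContinuousLinearMap.comp_apply, _root_.smul_apply, In_dl, map_smul, map_smul, hpdl u hu,
        ContinuousLinearMap.comp_apply, _root_.smul_apply, Di_dl τ j hj, map_smul, map_smul, hd u hu,
        Pi.add_apply, ei_ne hj, add_zero]
      by_cases h0 : α j = 0
      · simp [h0]
      obtain ⟨β, rfl⟩ : ∃ β : MIdx, α = β + ei j := by
        refine ⟨α - ei j, ?_⟩
        ext k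
        by_cases hk : k = j
        · subst hk; simp [ei]; omega
        · simp [ei, hk]
      have h6 : β + ei j + ei τ - ei j = β + ei τ := by
        rw [add_right_comm, add_tsub_cancel_right]
      rw [h6]
      have h1 := bc_pos τ (β + ei j + ei τ)
      have h1' := bc_pos τ (β + ei τ)
      have hle := le_deg β τ
      have hle' : (β τ : ℝ) ≤ deg β := by exact_mod_cast hle
      have h3 : bc τ (β + ei τ) * ((deg β : ℝ) + 2) =
          bc τ (β + ei j + ei τ) * ((deg β : ℝ) + 1 - β τ) := by
        unfold bc
        simp only [deg_add, deg_ei, Pi.add_apply, ei_same, ei_ne hj.symm, add_zero]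
        have := Nat.choose_mul_succ_eq (deg β + 1) (β τ + 1)
        have h7 : ((deg β + 1 + 1 - (β τ + 1) : ℕ) : ℝ) = (deg β : ℝ) + 1 - β τ := by
          rw [Nat.cast_sub (by omega)]; push_cast; ring
        rw [← h7]
        have h8 : (deg β : ℝ) + 2 = ((deg β + 1 + 1 : ℕ) : ℝ) := by push_cast; ring
        rw [h8]
        exact_mod_cast this
      simp only [smul_eq_mul, wt, deg_add, deg_ei, Pi.add_apply, ei_same, ei_ne hj.symm, add_zero]
      push_cast
      have h5 : l ^ (deg β + 1 + 1 + (β τ + 1)) = l ^ (deg β + 1 + (β τ + 1)) * l := by ring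
      rw [h5]
      have h9 : (0 : ℝ) < (deg β : ℝ) + 1 - β τ := by linarith
      have h10 : (0 : ℝ) < (deg β : ℝ) + 1 + 1 := by positivity
      field_simp
      linear_combination (-mono (u - p) (β + ei τ)) * h3
    have := congrArg (fun T : L1 →L[ℝ] ℝ => T b) h2
    simpa using this

end CKaux

end


noncomputable section

namespace CKaux

open Filter Topology

lemma ift {X Y : Type*} [NormedAddCommGroup X] [NormedSpace ℝ X] [CompleteSpace X]
    [NormedAddCommGroup Y] [NormedSpace ℝ Y] [CompleteSpace Y] (F : X × Y → Y)
    (hF : ContDiff ℝ 1 F) (x0 : X) (h : ∀ q, F (x0, q) = q) :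
    ∀ᶠ x in 𝓝 x0, ∃ q, F (x, q) = 0 := by
  have dfu : HasStrictFDerivAt F (fderiv ℝ F (x0, 0)) (x0, 0) :=
    hF.contDiffAt.hasStrictFDerivAt (by norm_num)
  have h1 : HasFDerivAt (fun q => F (x0, q)) (fderiv ℝ F (x0, 0) ∘L .inr ℝ X Y) (0 : Y) :=
    dfu.hasFDerivAt.comp (0 : Y) (hasFDerivAt_prodMk_right x0 (0 : Y))
  have h2 : (fun q => F (x0, q)) = id := funext h
  rw [h2] at h1
  have h3 : fderiv ℝ F (x0, 0) ∘L .inr ℝ X Y = ContinuousLinearMap.id ℝ Y :=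
    h1.unique (hasFDerivAt_id _)
  have hinv : (fderiv ℝ F (x0, 0) ∘L .inr ℝ X Y).IsInvertible := by
    rw [h3]; exact ⟨ContinuousLinearEquiv.refl ℝ Y, rfl⟩
  have h4 := dfu.eventually_apply_implicitFunctionOfProdDomain hinv
  filter_upwards [h4] with x hx
  exact ⟨_, hx.trans (h 0)⟩

/-- the 1-jet components of a function -/
def jet (f : (Fin 3 → ℝ) → ℝ) : Option (Fin 3) → (Fin 3 → ℝ) → ℝ
  | none => f
  | some j => pd j f

lemma analyticAt_pd {f : (Fin 3 → ℝ) → ℝ} {p : Fin 3 → ℝ} (hf : AnalyticAt ℝ f p) (j : Fin 3) :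
    AnalyticAt ℝ (pd j f) p :=
  ((ContinuousLinearMap.apply ℝ ℝ (Pi.single j (1 : ℝ) : Fin 3 → ℝ)).analyticAt _).fun_comp hf.fderiv

lemma analyticAt_jet {f : (Fin 3 → ℝ) → ℝ} {p : Fin 3 → ℝ} (hf : AnalyticAt ℝ f p)
    (o : Option (Fin 3)) : AnalyticAt ℝ (jet f o) p := by
  cases o with
  | none => exact hf
  | some j => exact analyticAt_pd hf j

/-- integration operators acting on jets -/
def Sop (τ : Fin 3) : Option (Fin 3) → (L1 →L[ℝ] L1)
  | none => In τ
  | some j => Di τ j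

/-- scaling factors -/
def sc (l : ℝ) : Option (Fin 3) → ℝ
  | none => l ^ 2
  | some _ => l

lemma Mu_one (τ : Fin 3) (b : L1) : Mu τ b (dl 0) = b := by
  have : (Mu τ).flip (dl 0) = ContinuousLinearMap.id ℝ L1 := by
    apply clm_ext
    intro α
    have := bc_pos τ α
    rw [ContinuousLinearMap.flip_apply, Mu_dl]
    have h0 : bc τ 0 = 1 := by simp [bc, deg]
    rw [h0, add_zero, mul_one, div_self this.ne', one_smul]; rfl
  have h := congrArg (fun T : L1 →L[ℝ] L1 => T b) this
  simpa using h

variable {ι κ : Type*} [Fintype ι] [Fintype κ] 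

lemma ck_params (τ : Fin 3) (c : κ → ι × ι × Option (Fin 3) → ℝ) (P0 : ι → ℝ) (J0 : ι → Option (Fin 3) → ℝ)
    (h0 : κ → ℝ) (hbase : ∀ e, ∑ t, c e t * P0 t.1 * J0 t.2.1 t.2.2 = h0 e)
    (hsurj : ∀ g : κ → ℝ, ∃ δ : ι → ℝ, ∀ e, ∑ t, c e t * δ t.1 * J0 t.2.1 t.2.2 = g e) :
    ∃ K : ι → κ → ℝ,
      (∀ g : κ → ℝ, ∀ e, ∑ t, c e t * (∑ e', K t.1 e' * g e') * J0 t.2.1 t.2.2 = g e) ∧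
    ∀ᶠ x in 𝓝 (((fun i o => J0 i o • dl 0), (fun _ => 0), (fun e => h0 e • dl 0)) :
        (ι → Option (Fin 3) → L1) × (Option (Fin 3) → ℝ) × (κ → L1)),
      ∃ q : κ → L1, ∀ e, ∑ t : ι × ι × Option (Fin 3), c e t • Mu τ (P0 t.1 • dl 0 + ∑ e', K t.1 e' • q e')
        (x.1 t.2.1 t.2.2 + x.2.1 t.2.2 • Sop τ t.2.2 (∑ e', K t.2.1 e' • q e')) = x.2.2 e := by
  classical
  have := fun e' => hsurj (Pi.single e' 1)
  choose K hK using this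
  refine ⟨fun i e => K e i, ?_, ?_⟩
  · intro g e
    have : ∀ t : ι × ι × Option (Fin 3), c e t * (∑ e', K e' t.1 * g e') * J0 t.2.1 t.2.2 =
        ∑ e', g e' * (c e t * K e' t.1 * J0 t.2.1 t.2.2) := by
      intro t
      rw [Finset.mul_sum, Finset.sum_mul]
      exact Finset.sum_congr rfl fun _ _ => by ring
    simp_rw [this]
    rw [Finset.sum_comm]
    simp_rw [← Finset.mul_sum, hK]
    simp [Pi.single_apply]
  · let F : ((ι → Option (Fin 3) → L1) × (Option (Fin 3) → ℝ) × (κ → L1)) × (κ → L1) → (κ → L1) :=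
      fun x e => ∑ t : ι × ι × Option (Fin 3), c e t • Mu τ (P0 t.1 • dl 0 + ∑ e', K e' t.1 • x.2 e')
        (x.1.1 t.2.1 t.2.2 + x.1.2.1 t.2.2 • Sop τ t.2.2 (∑ e', K e' t.2.1 • x.2 e')) - x.1.2.2 e
    have hF : ContDiff ℝ 1 F := by
      rw [contDiff_pi]
      intro e
      have hk : ∀ i, ContDiff ℝ 1 (fun x : ((ι → Option (Fin 3) → L1) × (Option (Fin 3) → ℝ) × (κ → L1)) × (κ → L1) =>
        ∑ e', K e' i • x.2 e') := by intro i; fun_prop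
      have hs : ∀ o, ContDiff ℝ 1 (fun x : ((ι → Option (Fin 3) → L1) × (Option (Fin 3) → ℝ) × (κ → L1)) × (κ → L1) =>
        x.1.2.1 o) := by intro i; fun_prop
      have hj : ∀ i o, ContDiff ℝ 1 (fun x : ((ι → Option (Fin 3) → L1) × (Option (Fin 3) → ℝ) × (κ → L1)) × (κ → L1) =>
        x.1.1 i o) := by intro i o; fun_prop
      refine ContDiff.sub (ContDiff.sum fun t _ => ContDiff.const_smul _ ?_) (by fun_prop)
      refine ContDiff.clm_apply ((Mu τ).contDiff.comp (contDiff_const.add (hk _))) ?_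
      exact (hj _ _).add ((hs _).smul ((Sop τ t.2.2).contDiff.comp (hk _)))
    have := ift F hF ((fun i o => J0 i o • dl 0), (fun _ => 0), (fun e => h0 e • dl 0)) ?_
    · filter_upwards [this] with x ⟨q, hq⟩
      refine ⟨q, fun e => ?_⟩
      have := congrFun hq e
      simpa [F, sub_eq_zero] using this
    · intro q
      ext1 e
      simp only [F, zero_smul, add_zero, map_smul, Mu_one, smul_add, Finset.sum_add_distrib]
      have h1 : ∑ t : ι × ι × Option (Fin 3), c e t • J0 t.2.1 t.2.2 • P0 t.1 • dl 0 = h0 e • dl 0 := by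
        rw [← hbase, Finset.sum_smul]
        refine Finset.sum_congr rfl fun t _ => ?_
        simp only [smul_smul]; congr 1; ring
      have h2 : ∑ t : ι × ι × Option (Fin 3), c e t • J0 t.2.1 t.2.2 • ∑ e', K e' t.1 • q e' = q e := by
        have : ∀ t : ι × ι × Option (Fin 3), c e t • J0 t.2.1 t.2.2 • ∑ e', K e' t.1 • q e' =
          ∑ e', (c e t * K e' t.1 * J0 t.2.1 t.2.2) • q e' := by
          intro t
          simp only [Finset.smul_sum, smul_smul]
          exact Finset.sum_congr rfl fun _ _ => by congr 1; ring
        simp_rw [this]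
        rw [Finset.sum_comm]
        simp_rw [← Finset.sum_smul, hK]
        simp [Pi.single_apply]
      rw [h1, h2]; simp

/-- Cauchy-Kovalevskaya theorem for quasi-linear implicit systems. -/
theorem ck (τ : Fin 3) (p : Fin 3 → ℝ) (y0 : ι → (Fin 3 → ℝ) → ℝ) (hy0 : ∀ i, AnalyticAt ℝ (y0 i) p)
    (h : κ → (Fin 3 → ℝ) → ℝ) (hh : ∀ e, AnalyticAt ℝ (h e) p) (P0 : ι → ℝ)
    (c : κ → ι × ι × Option (Fin 3) → ℝ) (hc : ∀ e t, t.2.2 = some τ → c e t = 0)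
    (hbase : ∀ e, ∑ t, c e t * P0 t.1 * jet (y0 t.2.1) t.2.2 p = h e p)
    (hsurj : ∀ g : κ → ℝ, ∃ δ : ι → ℝ, ∀ e, ∑ t, c e t * δ t.1 * jet (y0 t.2.1) t.2.2 p = g e) :
    ∃ y : ι → (Fin 3 → ℝ) → ℝ, (∀ i, AnalyticAt ℝ (y i) p) ∧
      (∀ᶠ u in 𝓝 p, u τ = p τ → ∀ i, y i u = y0 i u) ∧
      (∀ i, pd τ (y i) p = P0 i) ∧
      (∀ᶠ u in 𝓝 p, ∀ e, ∑ t, c e t * pd τ (y t.1) u * jet (y t.2.1) t.2.2 u = h e u) := by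
  obtain ⟨K, hK, hpar⟩ := ck_params τ c P0 (fun i o => jet (y0 i) o p) (fun e => h e p) hbase hsurj
  have hE := fun (i : ι) (o : Option (Fin 3)) => enc_exists τ p (analyticAt_jet (hy0 i) o)
  choose E hE1 hE2 using hE
  have hH := fun (e : κ) => enc_exists τ p (hh e)
  choose H hH1 hH2 using hH
  let G : ι → ℝ → L1 := fun i l => P0 i • dl 0 - E i (some τ) l
  have hs : ∀ o, Tendsto (fun l => sc l o) (𝓝[>] 0) (𝓝 0) := by
    intro o
    have h1 : Continuous (fun l => sc l o) := by
      cases o <;> simp only [sc] <;> fun_prop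
    have := h1.tendsto 0
    have h2 : sc 0 o = 0 := by cases o <;> simp [sc]
    rw [h2] at this
    exact this.mono_left nhdsWithin_le_nhds
  have hlim : Tendsto (fun l => (((fun i o => E i o l + sc l o • Sop τ o (G i l)), (fun o => sc l o),
      (fun e => H e l)) : (ι → Option (Fin 3) → L1) × (Option (Fin 3) → ℝ) × (κ → L1))) (𝓝[>] 0)
      (𝓝 ((fun i o => jet (y0 i) o p • dl 0), (fun _ => 0), (fun e => h e p • dl 0))) := by
    refine Tendsto.prodMk_nhds ?_ (Tendsto.prodMk_nhds ?_ ?_)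
    · rw [tendsto_pi_nhds]; intro i
      rw [tendsto_pi_nhds]; intro o
      have h1 : Tendsto (G i) (𝓝[>] 0) (𝓝 _) := tendsto_const_nhds.sub (hE1 i (some τ))
      have h2 := (hE1 i o).add ((hs o).smul (((Sop τ o).continuous.tendsto _).comp h1))
      rw [zero_smul, add_zero] at h2
      exact h2
    · rw [tendsto_pi_nhds]; exact hs
    · rw [tendsto_pi_nhds]; exact hH1
  have hlt : ∀ᶠ l in 𝓝[>] (0 : ℝ), 0 < l ∧ l ≤ 1 := by
    have h1 : ∀ᶠ l in 𝓝[>] (0 : ℝ), l ≤ 1 :=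
      eventually_nhdsWithin_of_eventually_nhds (eventually_le_nhds (by norm_num))
    filter_upwards [h1, self_mem_nhdsWithin] with l h1 h3 using ⟨h3, h1⟩
  have hall := (hlt.and (hlim.eventually hpar)).and
    ((eventually_all.2 fun i => eventually_all.2 fun o => hE2 i o).and (eventually_all.2 hH2))
  obtain ⟨l, ⟨⟨hl, hl1⟩, q, hq⟩, hEl, hHl⟩ := hall.exists
  dsimp only at hq
  obtain ⟨ev, ev1, ev2, ev3, ev4, ev5, ev6, ev7⟩ := exists_ev_full τ p hl hl1
  have hEu := eventually_all.2 fun i => eventually_all.2 fun o => hEl i o ev ev1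
  have hHu := eventually_all.2 fun e => hHl e ev ev1
  have hballp : ∀ᶠ u in 𝓝 p, u ∈ Metric.ball p (l ^ 2 / 2) := Metric.ball_mem_nhds p (by positivity)
  have hpball := hballp.self_of_nhds
  let Kq : ι → L1 := fun i => ∑ e', K i e' • q e'
  let Q : ι → L1 := fun i => G i l + Kq i
  let y : ι → (Fin 3 → ℝ) → ℝ := fun i u => y0 i u + ev u (l ^ 2 • In τ (Q i))
  have hdy : ∀ᶠ u in 𝓝 p, ∀ i j, pd j (y i) u = pd j (y0 i) u + pd j (fun u => ev u (l ^ 2 • In τ (Q i))) u := by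
    filter_upwards [hballp, eventually_all.2 fun i => (hy0 i).eventually_analyticAt] with u hu hu2 i j
    unfold pd
    rw [fderiv_fun_add (hu2 i).differentiableAt (ev2 u hu _).differentiableAt]
    rfl
  have hyτ : ∀ᶠ u in 𝓝 p, ∀ i, pd τ (y i) u = P0 i + ev u (Kq i) := by
    filter_upwards [hballp, hdy, hEu] with u hu hu2 hu3 i
    rw [hu2, ev6 u hu]
    have := hu3 i (some τ)
    simp only [jet] at this
    simp only [Q, G, map_add, map_sub, map_smul, ev4 u hu, ← this, smul_eq_mul]
    ring
  have hyj : ∀ᶠ u in 𝓝 p, ∀ i, ∀ o, o ≠ some τ → ev u ((E i o l + sc l o • Sop τ o (G i l)) +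
      sc l o • Sop τ o (Kq i)) = jet (y i) o u := by
    filter_upwards [hballp, hdy, hEu] with u hu hu2 hu3 i o ho
    have := hu3 i o
    cases o with
    | none =>
      simp only [jet] at this
      simp only [jet, sc, Sop, y, Q, map_add, map_smul, ← this, smul_add]
      ring
    | some j =>
      have hj : j ≠ τ := fun h => ho (by rw [h])
      simp only [jet] at this
      simp only [jet]
      rw [hu2, ev7 u hu _ _ hj]
      simp only [sc, Sop, Q, map_add, map_smul, ← this, smul_add]
      ring
  have heq : ∀ᶠ u in 𝓝 p, ∀ e, ∑ t, c e t * pd τ (y t.1) u * jet (y t.2.1) t.2.2 u = h e u := by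
    filter_upwards [hballp, hyτ, hyj, hHu] with u hu hu1 hu2 hu3 e
    rw [hu3 e, ← hq e, map_sum]
    refine Finset.sum_congr rfl fun t _ => ?_
    by_cases ht : t.2.2 = some τ
    · simp [hc e t ht]
    · rw [map_smul, ev3 u hu, ← hu2 _ _ ht, hu1]
      simp only [map_add, map_smul, ev4 u hu, smul_eq_mul, Kq]
      ring
  have hy0' : ∀ᶠ u in 𝓝 p, u τ = p τ → ∀ i, y i u = y0 i u := by
    filter_upwards [hballp] with u hu hup i
    simp only [y]
    rw [map_smul, ev5 u hu _ hup]; simp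
  refine ⟨y, fun i => (hy0 i).add (ev2 p hpball _), hy0', ?_, heq⟩
  have hjp : ∀ i o, o ≠ some τ → jet (y i) o p = jet (y0 i) o p := by
    intro i o ho
    cases o with
    | none => exact hy0'.self_of_nhds rfl i
    | some j =>
      have hj : j ≠ τ := fun h => ho (by rw [h])
      simp only [jet]
      rw [hdy.self_of_nhds i j]
      rw [pd_eq_of_line (j := j) (d := 0) (ev2 p hpball _).differentiableAt, add_zero]
      have hcont : Tendsto (fun s : ℝ => p + s • (Pi.single j 1 : Fin 3 → ℝ)) (𝓝 0) (𝓝 p) := by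
        have : Continuous (fun s : ℝ => p + s • (Pi.single j 1 : Fin 3 → ℝ)) := by fun_prop
        simpa using this.tendsto 0
      refine (hasDerivAt_const (0 : ℝ) (0 : ℝ)).congr_of_eventuallyEq ?_
      filter_upwards [hcont.eventually hballp] with s hs
      rw [map_smul, ev5 _ hs, smul_zero]
      simp [Pi.single_apply, hj.symm]
  have hq0 : ∀ e, ev p (q e) = 0 := by
    intro e
    rw [← hK (fun e => ev p (q e)) e]
    have h1 := heq.self_of_nhds e
    rw [← hbase e] at h1
    rw [← sub_eq_zero, ← Finset.sum_sub_distrib] at h1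
    rw [← h1]
    refine Finset.sum_congr rfl fun t _ => ?_
    by_cases ht : t.2.2 = some τ
    · simp [hc e t ht]
    · rw [hjp _ _ ht, hyτ.self_of_nhds]
      simp only [Kq, map_sum, map_smul, smul_eq_mul]
      ring
  intro i
  rw [hyτ.self_of_nhds]
  simp [Kq, hq0]

end CKaux

end


noncomputable section

namespace CKaux

open Filter Topology

theorem ck_bilin {ι κ : Type*} [Fintype ι] [Fintype κ] (τ : Fin 3) (p : Fin 3 → ℝ)
    (B : (ι → ℝ) →ₗ[ℝ] (ι → Option (Fin 3) → ℝ) →ₗ[ℝ] (κ → ℝ))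
    (hB : ∀ P J J', (∀ i o, o ≠ some τ → J i o = J' i o) → B P J = B P J')
    (y0 : ι → (Fin 3 → ℝ) → ℝ) (hy0 : ∀ i, AnalyticAt ℝ (y0 i) p)
    (h : κ → (Fin 3 → ℝ) → ℝ) (hh : ∀ e, AnalyticAt ℝ (h e) p) (P0 : ι → ℝ)
    (hbase : B P0 (fun i o => jet (y0 i) o p) = fun e => h e p)
    (hsurj : ∀ g : κ → ℝ, ∃ δ : ι → ℝ, B δ (fun i o => jet (y0 i) o p) = g) :
    ∃ y : ι → (Fin 3 → ℝ) → ℝ, (∀ i, AnalyticAt ℝ (y i) p) ∧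
      (∀ᶠ u in 𝓝 p, u τ = p τ → ∀ i, y i u = y0 i u) ∧
      (∀ i, pd τ (y i) p = P0 i) ∧
      (∀ᶠ u in 𝓝 p, B (fun i => pd τ (y i) u) (fun i o => jet (y i) o u) = fun e => h e u) := by
  classical
  let c : κ → ι × ι × Option (Fin 3) → ℝ := fun e t =>
    B (Pi.single t.1 1) (Pi.single t.2.1 (Pi.single t.2.2 1)) e
  have hexp : ∀ P J e, ∑ t, c e t * P t.1 * J t.2.1 t.2.2 = B P J e := by
    intro P J e
    have hP : P = ∑ i, P i • (Pi.single i 1 : ι → ℝ) := by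
      ext i; simp [Finset.sum_apply, Pi.single_apply]
    have hJ : J = ∑ i, ∑ o, J i o • (Pi.single i (Pi.single o 1) : ι → Option (Fin 3) → ℝ) := by
      ext i o
      simp only [Finset.sum_apply, Pi.smul_apply]
      rw [Finset.sum_eq_single i]
      · rw [Finset.sum_eq_single o]
        · simp
        · intro b _ hb; simp [hb.symm]
        · simp
      · intro b _ hb
        refine Finset.sum_eq_zero fun o' _ => ?_
        simp [hb.symm]
      · simp
    conv_rhs => rw [hP, hJ]
    simp only [map_sum, map_smul, LinearMap.sum_apply, LinearMap.smul_apply, Finset.sum_apply,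
      Pi.smul_apply, smul_eq_mul, Finset.smul_sum]
    rw [Fintype.sum_prod_type_right, Fintype.sum_prod_type]
    refine Finset.sum_congr rfl fun i' _ => ?_
    refine Finset.sum_congr rfl fun o _ => ?_
    try rw [Finset.mul_sum]
    refine Finset.sum_congr rfl fun i _ => ?_
    simp only [c]; ring
  have hc : ∀ e t, t.2.2 = some τ → c e t = 0 := by
    intro e t ht
    simp only [c]
    rw [hB _ _ 0, map_zero]; rfl
    intro i o ho
    by_cases hi : i = t.2.1
    · subst hi
      rw [Pi.single_eq_same, Pi.single_eq_of_ne (by rw [ht]; exact ho)]; rfl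
    · rw [Pi.single_eq_of_ne hi]; rfl
  obtain ⟨y, h1, h2, h3, h4⟩ := ck τ p y0 hy0 h hh P0 c hc
    (fun e => by rw [hexp P0 (fun i o => jet (y0 i) o p), hbase])
    (fun g => by
      obtain ⟨δ, hδ⟩ := hsurj g
      exact ⟨δ, fun e => by rw [hexp δ (fun i o => jet (y0 i) o p), hδ]⟩)
  refine ⟨y, h1, h2, h3, ?_⟩
  filter_upwards [h4] with u hu
  ext e
  rw [← hu e, hexp (fun i => pd τ (y i) u) (fun i o => jet (y i) o u)]

/-- the bilinear form of the system -/
def Bform (m : ℕ) (s : Fin m → Fin 3) :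
    (((Fin 3 × Fin 3) ⊕ Fin 3) → ℝ) →ₗ[ℝ] (((Fin 3 × Fin 3) ⊕ Fin 3) → Option (Fin 3) → ℝ) →ₗ[ℝ]
      (((Fin 3 ⊕ Fin 3) ⊕ (Fin 3 × Fin m)) → ℝ) :=
  LinearMap.mk₂ ℝ (fun P J => Sum.elim (Sum.elim
      (fun k => ∑ l, (P (.inl (l, k)) * J (.inl (l, k)) none + J (.inl (l, k)) none * P (.inl (l, k))))
      (fun k => ∑ l, (P (.inl (l, k + 1)) * J (.inl (l, k + 2)) none +
        J (.inl (l, k + 1)) none * P (.inl (l, k + 2)))))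
      (fun q => ∑ l, (J (.inl (l, q.1)) (some (s q.2)) * P (.inr l) -
        P (.inl (l, q.1)) * J (.inr l) (some (s q.2)))))
    (by intro P P' J; ext ((k | k) | q) <;> simp [Fin.sum_univ_three] <;> ring)
    (by intro t P J; ext ((k | k) | q) <;> simp [Fin.sum_univ_three] <;> ring)
    (by intro P P' J; ext ((k | k) | q) <;> simp [Fin.sum_univ_three] <;> ring)
    (by intro t P J; ext ((k | k) | q) <;> simp [Fin.sum_univ_three] <;> ring)

/-- the cross product, written via the matrix -/
def cr (θ β : Fin 3 → ℝ) (i : Fin 3) : ℝ := ∑ l, crossMat θ l i * β l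

theorem step (τ : Fin 3) (p : Fin 3 → ℝ) (m : ℕ) (s : Fin m → Fin 3) (hs : ∀ r, s r ≠ τ)
    (a0 : Fin 3 → Fin 3 → (Fin 3 → ℝ) → ℝ) (x0 : Fin 3 → (Fin 3 → ℝ) → ℝ)
    (ha0 : ∀ l i, AnalyticAt ℝ (a0 l i) p) (hx0 : ∀ l, AnalyticAt ℝ (x0 l) p)
    (hap : ∀ l i, a0 l i p = if l = i then 1 else 0)
    (θ ω : Fin 3 → Fin 3 → ℝ)
    (hθ : ∀ r l i, pd (s r) (a0 l i) p = crossMat (θ (s r)) l i)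
    (hω : ∀ r l, pd (s r) (x0 l) p = ω (s r) l)
    (Ω : Fin 3 → Fin 3 → Fin 3 → (Fin 3 → ℝ) → ℝ)
    (hΩ : ∀ i j k : Fin 3, AnalyticAt ℝ (Ω i j k) p)
    (hbase : ∀ i r, cr (θ (s r)) (ω τ) i - cr (θ τ) (ω (s r)) i = Ω i (s r) τ p)
    (hsurj : ∀ g : Fin m → Fin 3 → ℝ, ∃ α β : Fin 3 → ℝ, ∀ r i,
      cr (θ (s r)) β i - cr α (ω (s r)) i = g r i) :
    ∃ (a : Fin 3 → Fin 3 → (Fin 3 → ℝ) → ℝ) (x : Fin 3 → (Fin 3 → ℝ) → ℝ),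
      (∀ l i, AnalyticAt ℝ (a l i) p) ∧ (∀ l, AnalyticAt ℝ (x l) p) ∧
      (∀ᶠ u in 𝓝 p, u τ = p τ → ∀ l i, a l i u = a0 l i u) ∧
      (∀ᶠ u in 𝓝 p, u τ = p τ → ∀ l, x l u = x0 l u) ∧
      (∀ l i, pd τ (a l i) p = crossMat (θ τ) l i) ∧
      (∀ l, pd τ (x l) p = ω τ l) ∧
      (∀ᶠ u in 𝓝 p, ∀ i k, ∑ l, (pd τ (a l i) u * a l k u + a l i u * pd τ (a l k) u) = 0) ∧
      (∀ᶠ u in 𝓝 p, ∀ i r, ∑ l, (pd (s r) (a l i) u * pd τ (x l) u -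
        pd τ (a l i) u * pd (s r) (x l) u) = Ω i (s r) τ u) := by
  let y0 : ((Fin 3 × Fin 3) ⊕ Fin 3) → (Fin 3 → ℝ) → ℝ := Sum.elim (fun q => a0 q.1 q.2) x0
  have H := ck_bilin τ p (Bform m s) (y0 := y0) (h := Sum.elim (fun _ _ => 0) (fun q => Ω q.1 (s q.2) τ))
    (P0 := Sum.elim (fun q => crossMat (θ τ) q.1 q.2) (ω τ))
  specialize H ?_ ?_ ?_ ?_ ?_
  · intro P J J' hJ
    have hn : ∀ i, J i none = J' i none := fun i => hJ _ _ (by simp)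
    have hs' : ∀ i r, J i (some (s r)) = J' i (some (s r)) := fun i r => hJ _ _ (by simp [hs r])
    ext ((k | k) | q) <;> simp [Bform, hn, hs']
  · rintro (⟨l, i⟩ | l)
    · exact ha0 l i
    · exact hx0 l
  · rintro (_ | q)
    · exact analyticAt_const
    · exact hΩ _ _ _
  · ext ((k | k) | q)
    · fin_cases k <;> simp [Bform, y0, jet, hap, crossMat, Fin.sum_univ_three]
    · fin_cases k <;> simp [Bform, y0, jet, hap, crossMat, Fin.sum_univ_three]
    · have := hbase q.1 q.2
      simp only [cr, ← Finset.sum_sub_distrib] at this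
      simpa [Bform, y0, jet, hθ, hω] using this
  · intro g
    let S : Matrix (Fin 3) (Fin 3) ℝ :=
      !![g (.inl (.inl 0)) / 2, g (.inl (.inr 2)) / 2, g (.inl (.inr 1)) / 2;
         g (.inl (.inr 2)) / 2, g (.inl (.inl 1)) / 2, g (.inl (.inr 0)) / 2;
         g (.inl (.inr 1)) / 2, g (.inl (.inr 0)) / 2, g (.inl (.inl 2)) / 2]
    obtain ⟨α, β, hαβ⟩ := hsurj (fun r i => g (.inr (i, r)) + ∑ l, S l i * ω (s r) l)
    refine ⟨Sum.elim (fun q => S q.1 q.2 + crossMat α q.1 q.2) β, ?_⟩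
    ext ((k | k) | q)
    · fin_cases k <;> simp [Bform, y0, jet, hap, crossMat, Fin.sum_univ_three, S]
    · fin_cases k <;> simp [Bform, y0, jet, hap, crossMat, Fin.sum_univ_three, S] <;> ring
    · have := hαβ q.2 q.1
      simp only [cr, ← Finset.sum_sub_distrib] at this
      simp only [Bform, y0, jet, hθ, hω, LinearMap.mk₂_apply, Sum.elim_inl, Sum.elim_inr]
      rw [← sub_eq_iff_eq_add, ← Finset.sum_sub_distrib] at this
      rw [← this]
      exact Finset.sum_congr rfl fun _ _ => by ring
  obtain ⟨y, h1, h2, h3, h4⟩ := H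
  refine ⟨fun l i => y (.inl (l, i)), fun l => y (.inr l), fun l i => h1 _, fun l => h1 _, ?_, ?_,
    fun l i => h3 (.inl (l, i)), fun l => h3 (.inr l), ?_, ?_⟩
  · filter_upwards [h2] with u hu hup l i using hu hup _
  · filter_upwards [h2] with u hu hup l using hu hup _
  · filter_upwards [h4] with u hu i k
    have hd : ∀ k, _ := fun k => congrFun hu (.inl (.inl k))
    have ho : ∀ k, _ := fun k => congrFun hu (.inl (.inr k))
    have hd0 := hd 0
    have hd1 := hd 1
    have hd2 := hd 2
    have ho0 := ho 0
    have ho1 := ho 1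
    have ho2 := ho 2
    simp only [Bform, LinearMap.mk₂_apply, Sum.elim_inl, Sum.elim_inr, jet, Fin.sum_univ_three,
      zero_add, (by decide : (1 : Fin 3) + 1 = 2), (by decide : (1 : Fin 3) + 2 = 0),
      (by decide : (2 : Fin 3) + 1 = 0), (by decide : (2 : Fin 3) + 2 = 1)]
      at hd0 hd1 hd2 ho0 ho1 ho2
    fin_cases i <;> fin_cases k <;> simp only [Fin.sum_univ_three, Fin.zero_eta, Fin.mk_one,
      Fin.reduceFinMk] <;> linarith
  · filter_upwards [h4] with u hu i r
    have := congrFun hu (.inr (i, r))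
    simpa [Bform, jet] using this

end CKaux

end


noncomputable section

namespace CKaux

/-- dot product -/
def dt (u v : Fin 3 → ℝ) : ℝ := u 0 * v 0 + u 1 * v 1 + u 2 * v 2

/-- determinant of three vectors -/
def dt3 (ω : Fin 3 → Fin 3 → ℝ) : ℝ := dt (ω 0) (cr (ω 1) (ω 2))

lemma cr0 (u v : Fin 3 → ℝ) : cr u v 0 = u 1 * v 2 - u 2 * v 1 := by
  simp [cr, crossMat, Fin.sum_univ_three]; ring
lemma cr1 (u v : Fin 3 → ℝ) : cr u v 1 = u 2 * v 0 - u 0 * v 2 := by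
  simp [cr, crossMat, Fin.sum_univ_three]; ring
lemma cr2 (u v : Fin 3 → ℝ) : cr u v 2 = u 0 * v 1 - u 1 * v 0 := by
  simp [cr, crossMat, Fin.sum_univ_three]; ring

/-- the connection coefficients -/
def tht (b ω : Fin 3 → Fin 3 → ℝ) (j i : Fin 3) : ℝ :=
  ((dt (b 0) (ω 0) + dt (b 1) (ω 1) + dt (b 2) (ω 2)) / 2 * ω j i -
    (dt (b 0) (ω j) * ω 0 i + dt (b 1) (ω j) * ω 1 i + dt (b 2) (ω j) * ω 2 i)) / dt3 ω

lemma tht_mul (b ω : Fin 3 → Fin 3 → ℝ) (h : dt3 ω ≠ 0) (j i : Fin 3) :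
  dt3 ω * tht b ω j i = ((dt (b 0) (ω 0) + dt (b 1) (ω 1) + dt (b 2) (ω 2)) / 2 * ω j i -
    (dt (b 0) (ω j) * ω 0 i + dt (b 1) (ω j) * ω 1 i + dt (b 2) (ω j) * ω 2 i)) := by
  unfold tht; field_simp

lemma tht_eq (b ω : Fin 3 → Fin 3 → ℝ) (h : dt3 ω ≠ 0) (k i : Fin 3) :
    cr (tht b ω (k + 1)) (ω (k + 2)) i - cr (tht b ω (k + 2)) (ω (k + 1)) i = b k i := by
  apply mul_left_cancel₀ h
  have H := tht_mul b ω h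
  fin_cases k <;> fin_cases i <;>
    simp only [Fin.zero_eta, Fin.mk_one, Fin.reduceFinMk, zero_add, (by decide : (1 : Fin 3) + 1 = 2),
      (by decide : (1 : Fin 3) + 2 = 0), (by decide : (2 : Fin 3) + 1 = 0),
      (by decide : (2 : Fin 3) + 2 = 1), cr0, cr1, cr2]
  · have e1 := H 1 1; have e2 := H 1 2; have e3 := H 2 1; have e4 := H 2 2
    simp only [dt3, dt, cr0, cr1, cr2] at e1 e2 e3 e4 ⊢
    linear_combination ω 2 2 * e1 - ω 2 1 * e2 - ω 1 2 * e3 + ω 1 1 * e4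
  · have e1 := H 1 2; have e2 := H 1 0; have e3 := H 2 2; have e4 := H 2 0
    simp only [dt3, dt, cr0, cr1, cr2] at e1 e2 e3 e4 ⊢
    linear_combination ω 2 0 * e1 - ω 2 2 * e2 - ω 1 0 * e3 + ω 1 2 * e4
  · have e1 := H 1 0; have e2 := H 1 1; have e3 := H 2 0; have e4 := H 2 1
    simp only [dt3, dt, cr0, cr1, cr2] at e1 e2 e3 e4 ⊢
    linear_combination ω 2 1 * e1 - ω 2 0 * e2 - ω 1 1 * e3 + ω 1 0 * e4
  · have e1 := H 2 1; have e2 := H 2 2; have e3 := H 0 1; have e4 := H 0 2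
    simp only [dt3, dt, cr0, cr1, cr2] at e1 e2 e3 e4 ⊢
    linear_combination ω 0 2 * e1 - ω 0 1 * e2 - ω 2 2 * e3 + ω 2 1 * e4
  · have e1 := H 2 2; have e2 := H 2 0; have e3 := H 0 2; have e4 := H 0 0
    simp only [dt3, dt, cr0, cr1, cr2] at e1 e2 e3 e4 ⊢
    linear_combination ω 0 0 * e1 - ω 0 2 * e2 - ω 2 0 * e3 + ω 2 2 * e4
  · have e1 := H 2 0; have e2 := H 2 1; have e3 := H 0 0; have e4 := H 0 1
    simp only [dt3, dt, cr0, cr1, cr2] at e1 e2 e3 e4 ⊢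
    linear_combination ω 0 1 * e1 - ω 0 0 * e2 - ω 2 1 * e3 + ω 2 0 * e4
  · have e1 := H 0 1; have e2 := H 0 2; have e3 := H 1 1; have e4 := H 1 2
    simp only [dt3, dt, cr0, cr1, cr2] at e1 e2 e3 e4 ⊢
    linear_combination ω 1 2 * e1 - ω 1 1 * e2 - ω 0 2 * e3 + ω 0 1 * e4
  · have e1 := H 0 2; have e2 := H 0 0; have e3 := H 1 2; have e4 := H 1 0
    simp only [dt3, dt, cr0, cr1, cr2] at e1 e2 e3 e4 ⊢
    linear_combination ω 1 0 * e1 - ω 1 2 * e2 - ω 0 0 * e3 + ω 0 2 * e4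
  · have e1 := H 0 0; have e2 := H 0 1; have e3 := H 1 0; have e4 := H 1 1
    simp only [dt3, dt, cr0, cr1, cr2] at e1 e2 e3 e4 ⊢
    linear_combination ω 1 1 * e1 - ω 1 0 * e2 - ω 0 1 * e3 + ω 0 0 * e4

lemma tht_dt (b ω : Fin 3 → Fin 3 → ℝ) (h : dt3 ω ≠ 0) (j : Fin 3) (u β : Fin 3 → ℝ) :
    dt3 ω * dt u (cr (tht b ω j) β) =
      (dt (b 0) (ω 0) + dt (b 1) (ω 1) + dt (b 2) (ω 2)) / 2 * dt u (cr (ω j) β) -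
      (dt (b 0) (ω j) * dt u (cr (ω 0) β) + dt (b 1) (ω j) * dt u (cr (ω 1) β) +
        dt (b 2) (ω j) * dt u (cr (ω 2) β)) := by
  have H := tht_mul b ω h j
  generalize (dt (b 0) (ω 0) + dt (b 1) (ω 1) + dt (b 2) (ω 2)) / 2 = T at *
  generalize dt (b 0) (ω j) = c0 at *
  generalize dt (b 1) (ω j) = c1 at *
  generalize dt (b 2) (ω j) = c2 at *
  generalize dt3 ω = d at *
  have e0 := H 0
  have e1 := H 1
  have e2 := H 2
  simp only [dt, cr0, cr1, cr2]
  linear_combination (u 1 * -(β 2) + u 2 * β 1) * e0 + (u 0 * β 2 - u 2 * β 0) * e1 +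
    (u 1 * β 0 - u 0 * β 1) * e2

lemma dt_anti (u v β : Fin 3 → ℝ) : dt u (cr v β) = - dt v (cr u β) := by
  simp only [dt, cr0, cr1, cr2]; ring

lemma eq_zero_of_dts (ω : Fin 3 → Fin 3 → ℝ) (h : dt3 ω ≠ 0) (β : Fin 3 → ℝ)
    (h01 : dt (ω 0) (cr (ω 1) β) = 0) (h02 : dt (ω 0) (cr (ω 2) β) = 0)
    (h12 : dt (ω 1) (cr (ω 2) β) = 0) : β = 0 := by
  ext i
  apply mul_left_cancel₀ h
  simp only [dt3, dt, cr0, cr1, cr2, Pi.zero_apply, mul_zero] at *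
  fin_cases i <;> simp only [Fin.zero_eta, Fin.mk_one, Fin.reduceFinMk]
  · linear_combination ω 0 0 * h12 - ω 1 0 * h02 + ω 2 0 * h01
  · linear_combination ω 0 1 * h12 - ω 1 1 * h02 + ω 2 1 * h01
  · linear_combination ω 0 2 * h12 - ω 1 2 * h02 + ω 2 2 * h01

lemma inj_core (b ω : Fin 3 → Fin 3 → ℝ) (h : dt3 ω ≠ 0) (hA : dt (b 2) (ω 0) ≠ 0)
    (h0 : dt (b 2) (ω 1) = 0) (hC : dt (b 0) (ω 1) ≠ 0) (α β : Fin 3 → ℝ)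
    (e0 : ∀ i, cr (tht b ω 0) β i - cr α (ω 0) i = 0)
    (e1 : ∀ i, cr (tht b ω 1) β i - cr α (ω 1) i = 0) : α = 0 ∧ β = 0 := by
  have e0' : cr (tht b ω 0) β = cr α (ω 0) := by ext i; linarith [e0 i]
  have e1' : cr (tht b ω 1) β = cr α (ω 1) := by ext i; linarith [e1 i]
  have F11 := tht_dt b ω h 1 (ω 1) β
  have F00 := tht_dt b ω h 0 (ω 0) β
  have F10 := tht_dt b ω h 0 (ω 1) β
  have F01 := tht_dt b ω h 1 (ω 0) β
  have hself : ∀ u v : Fin 3 → ℝ, dt u (cr u v) = 0 := by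
    intro u v; simp only [dt, cr0, cr1, cr2]; ring
  have hself' : ∀ u v : Fin 3 → ℝ, dt u (cr v u) = 0 := by
    intro u v; simp only [dt, cr0, cr1, cr2]; ring
  rw [e0'] at F00 F10
  rw [e1'] at F11 F01
  rw [hself', hself, h0, dt_anti (ω 1) (ω 0)] at F11
  have E01 : dt (ω 0) (cr (ω 1) β) = 0 := by
    apply mul_left_cancel₀ hC; linarith
  rw [hself', hself, E01] at F00
  have E02 : dt (ω 0) (cr (ω 2) β) = 0 := by
    apply mul_left_cancel₀ hA; linarith
  rw [dt_anti (ω 1) (ω 0), hself (ω 1), E01] at F10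
  rw [hself (ω 0), E01, E02] at F01
  have hs : dt (ω 1) (cr α (ω 0)) + dt (ω 0) (cr α (ω 1)) = 0 := by
    simp only [dt, cr0, cr1, cr2]; ring
  have E12 : dt (ω 1) (cr (ω 2) β) = 0 := by
    apply mul_left_cancel₀ hA
    linear_combination F10 + F01 - dt3 ω * hs
  have hβ : β = 0 := eq_zero_of_dts ω h β E01 E02 E12
  subst hβ
  refine ⟨?_, rfl⟩
  have hz : ∀ u : Fin 3 → ℝ, cr u 0 = 0 := by intro u; ext i; simp [cr]
  rw [hz] at e0' e1'
  have hr : ∀ u : Fin 3 → ℝ, dt u 0 = 0 := by intro u; simp [dt]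
  have hsw : ∀ u v w : Fin 3 → ℝ, dt u (cr v w) = dt u (cr v w) := fun _ _ _ => rfl
  have hcyc : ∀ u v : Fin 3 → ℝ, dt u (cr v α) = dt v (cr α u) := by
    intro u v; simp only [dt, cr0, cr1, cr2]; ring
  apply eq_zero_of_dts ω h
  · rw [hcyc, ← e0', hr]
  · rw [hcyc, ← e0', hr]
  · rw [hcyc, ← e1', hr]

lemma surj_core (b ω : Fin 3 → Fin 3 → ℝ) (h : dt3 ω ≠ 0) (hA : dt (b 2) (ω 0) ≠ 0)
    (h0 : dt (b 2) (ω 1) = 0) (hC : dt (b 0) (ω 1) ≠ 0) (g0 g1 : Fin 3 → ℝ) :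
    ∃ α β : Fin 3 → ℝ, (∀ i, cr (tht b ω 0) β i - cr α (ω 0) i = g0 i) ∧
      (∀ i, cr (tht b ω 1) β i - cr α (ω 1) i = g1 i) := by
  let L : ((Fin 3 → ℝ) × (Fin 3 → ℝ)) →ₗ[ℝ] ((Fin 3 → ℝ) × (Fin 3 → ℝ)) :=
    { toFun := fun x => (fun i => cr (tht b ω 0) x.2 i - cr x.1 (ω 0) i,
        fun i => cr (tht b ω 1) x.2 i - cr x.1 (ω 1) i)
      map_add' := by
        intro x y
        ext i <;> fin_cases i <;> simp [cr0, cr1, cr2] <;> ring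
      map_smul' := by
        intro t x
        ext i <;> fin_cases i <;> simp [cr0, cr1, cr2] <;> ring }
  have hinj : Function.Injective L := by
    rw [← LinearMap.ker_eq_bot, LinearMap.ker_eq_bot']
    rintro ⟨α, β⟩ hx
    have h1 := congrArg Prod.fst hx
    have h2 := congrArg Prod.snd hx
    obtain ⟨r1, r2⟩ := inj_core b ω h hA h0 hC α β (fun i => congrFun h1 i) (fun i => congrFun h2 i)
    rw [r1, r2]; rfl
  obtain ⟨⟨α, β⟩, hx⟩ := LinearMap.injective_iff_surjective.1 hinj (g0, g1)
  exact ⟨α, β, fun i => congrFun (congrArg Prod.fst hx) i, fun i => congrFun (congrArg Prod.snd hx) i⟩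

lemma exists_core (b : Fin 3 → Fin 3 → ℝ) (hb : cr (b 2) (b 0) ≠ 0) :
    ∃ θ ω : Fin 3 → Fin 3 → ℝ, dt3 ω ≠ 0 ∧
      (∀ k i, cr (θ (k + 1)) (ω (k + 2)) i - cr (θ (k + 2)) (ω (k + 1)) i = b k i) ∧
      ∀ g0 g1 : Fin 3 → ℝ, ∃ α β : Fin 3 → ℝ, (∀ i, cr (θ 0) β i - cr α (ω 0) i = g0 i) ∧
      (∀ i, cr (θ 1) β i - cr α (ω 1) i = g1 i) := by
  have hpos : ∀ v : Fin 3 → ℝ, v ≠ 0 → dt v v ≠ 0 := by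
    intro v hv h
    apply hv
    simp only [dt] at h
    have h0 : v 0 = 0 := by nlinarith [sq_nonneg (v 0), sq_nonneg (v 1), sq_nonneg (v 2)]
    have h1 : v 1 = 0 := by nlinarith [sq_nonneg (v 0), sq_nonneg (v 1), sq_nonneg (v 2)]
    have h2 : v 2 = 0 := by nlinarith [sq_nonneg (v 0), sq_nonneg (v 1), sq_nonneg (v 2)]
    ext i; fin_cases i <;> assumption
  have hb2 : b 2 ≠ 0 := by
    intro h; apply hb; rw [h]; ext i; fin_cases i <;> simp [cr0, cr1, cr2]
  have hm := hpos _ hb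
  have hbb := hpos _ hb2
  let ω : Fin 3 → Fin 3 → ℝ := ![b 2, cr (cr (b 2) (b 0)) (b 2), cr (b 2) (b 0)]
  have hd : dt3 ω = - (dt (b 2) (b 2) * dt (cr (b 2) (b 0)) (cr (b 2) (b 0))) ∨ 
     dt3 ω = (dt (b 2) (b 2) * dt (cr (b 2) (b 0)) (cr (b 2) (b 0))) := by
    simp only [dt3, dt, cr0, cr1, cr2, ω, Matrix.cons_val]
    first
    | (left; ring; done)
    | (right; ring)
  have hd' : dt3 ω ≠ 0 := by
    rcases hd with h | h <;> rw [h]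
    · exact neg_ne_zero.2 (mul_ne_zero hbb hm)
    · exact mul_ne_zero hbb hm
  refine ⟨tht b ω, ω, hd', tht_eq b ω hd', surj_core b ω hd' hbb ?_ ?_⟩
  · simp only [dt, cr0, cr1, cr2, ω, Matrix.cons_val]; ring
  · have : dt (b 0) (ω 1) = dt (cr (b 2) (b 0)) (cr (b 2) (b 0)) := by
      simp only [dt, cr0, cr1, cr2, ω, Matrix.cons_val]; ring
    rw [this]; exact hm

lemma exists_alg (O : Fin 3 → Fin 3 → Fin 3 → ℝ) (hsk : ∀ i j k, O i j k = - O i k j)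
    (hnd : ∀ v : Fin 3 → ℝ, v ≠ 0 → ∃ i k : Fin 3, (∑ j, O i j k * v j) ≠ 0) :
    ∃ (t : Fin 3) (θ ω : Fin 3 → Fin 3 → ℝ), dt3 ω ≠ 0 ∧
      (∀ i j k, cr (θ j) (ω k) i - cr (θ k) (ω j) i = O i j k) ∧
      ∀ g0 g1 : Fin 3 → ℝ, ∃ α β : Fin 3 → ℝ, (∀ i, cr (θ t) β i - cr α (ω t) i = g0 i) ∧
      (∀ i, cr (θ (t + 1)) β i - cr α (ω (t + 1)) i = g1 i) := by
  have hsd : ∀ i j, O i j j = 0 := fun i j => by linarith [hsk i j j]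
  have hex : ∃ t : Fin 3, cr (fun i => O i t (t + 1)) (fun i => O i (t + 1) (t + 2)) ≠ 0 := by
    by_contra! hc
    have hpar : ∀ i i', O i 0 1 * O i' 1 2 = O i' 0 1 * O i 1 2 ∧
        O i 1 2 * O i' 2 0 = O i' 1 2 * O i 2 0 ∧ O i 2 0 * O i' 0 1 = O i' 2 0 * O i 0 1 := by
      have h := fun t i => congrFun (hc t) i
      have h00 := h 0 0
      have h01 := h 0 1
      have h02 := h 0 2
      have h10 := h 1 0
      have h11 := h 1 1
      have h12 := h 1 2
      have h20 := h 2 0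
      have h21 := h 2 1
      have h22 := h 2 2
      simp only [cr0, cr1, cr2, zero_add, (by decide : (1 : Fin 3) + 1 = 2),
        (by decide : (1 : Fin 3) + 2 = 0), (by decide : (2 : Fin 3) + 1 = 0),
        (by decide : (2 : Fin 3) + 2 = 1), Pi.zero_apply] at h00 h01 h02 h10 h11 h12 h20 h21 h22
      intro i i'
      fin_cases i <;> fin_cases i' <;> simp only [Fin.zero_eta, Fin.mk_one, Fin.reduceFinMk] <;>
        refine ⟨?_, ?_, ?_⟩ <;> first | trivial | rfl | linarith
    have key : ∀ v : Fin 3 → ℝ, (∀ i, O i 0 1 * v 1 = O i 2 0 * v 2) → (∀ i, O i 0 1 * v 0 = O i 1 2 * v 2) →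
        (∀ i, O i 1 2 * v 1 = O i 2 0 * v 0) → v = 0 := by
      intro v h1 h2 h3
      by_contra hv
      obtain ⟨i, k, hik⟩ := hnd v hv
      apply hik
      have a1 := hsk i 1 0
      have a2 := hsk i 2 1
      have a3 := hsk i 0 2
      rw [Fin.sum_univ_three]
      fin_cases k <;> simp only [Fin.zero_eta, Fin.mk_one, Fin.reduceFinMk, hsd, a1, a2, a3]
      · linarith [h1 i]
      · linarith [h2 i]
      · linarith [h3 i]
    have hz : ∀ i, O i 0 1 = 0 ∧ O i 1 2 = 0 ∧ O i 2 0 = 0 := by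
      intro i
      have := key ![O i 1 2, O i 2 0, O i 0 1] (fun i' => ?_) (fun i' => ?_) (fun i' => ?_)
      · have w0 := congrFun this 0
        have w1 := congrFun this 1
        have w2 := congrFun this 2
        simp only [Matrix.cons_val, Pi.zero_apply] at w0 w1 w2
        exact ⟨w2, w0, w1⟩
      · simp only [Matrix.cons_val]; linarith [(hpar i i').2.2]
      · simp only [Matrix.cons_val]; linarith [(hpar i i').1]
      · simp only [Matrix.cons_val]; linarith [(hpar i i').2.1]
    have := key (fun _ => 1) (fun i => by simp [hz i]) (fun i => by simp [hz i]) (fun i => by simp [hz i])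
    have := congrFun this 0
    simp at this
  obtain ⟨t, ht⟩ := hex
  obtain ⟨θ, ω, h1, h2, h3⟩ := exists_core (fun k i => O i (k + t + 1) (k + t + 2)) (by
    have e1 : (2 : Fin 3) + t + 1 = t := (by decide : ∀ t : Fin 3, 2 + t + 1 = t) t
    have e2 : (2 : Fin 3) + t + 2 = t + 1 := (by decide : ∀ t : Fin 3, 2 + t + 2 = t + 1) t
    have e3 : (0 : Fin 3) + t = t := zero_add t
    simpa only [e1, e2, e3] using ht)
  refine ⟨t, fun j => θ (j - t), fun j => ω (j - t), ?_, ?_, ?_⟩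
  · have : dt3 (fun j => ω (j - t)) = dt3 ω := by
      fin_cases t
      · simp
      · simp only [Fin.mk_one, dt3, (by decide : (0 : Fin 3) - 1 = 2), (by decide : (1 : Fin 3) - 1 = 0),
          (by decide : (2 : Fin 3) - 1 = 1), dt, cr0, cr1, cr2]; ring
      · simp only [Fin.reduceFinMk, dt3, (by decide : (0 : Fin 3) - 2 = 1), (by decide : (1 : Fin 3) - 2 = 2),
          (by decide : (2 : Fin 3) - 2 = 0), dt, cr0, cr1, cr2]; ring
    rw [this]; exact h1
  · intro i j k
    have hcyc : ∀ k : Fin 3, cr (θ (k + 1 - t)) (ω (k + 2 - t)) i - cr (θ (k + 2 - t)) (ω (k + 1 - t)) i =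
        O i (k + 1) (k + 2) := by
      intro k
      have := h2 (k - t) i
      have e1 : k - t + 1 = k + 1 - t := (by decide : ∀ k t : Fin 3, k - t + 1 = k + 1 - t) k t
      have e2 : k - t + 2 = k + 2 - t := (by decide : ∀ k t : Fin 3, k - t + 2 = k + 2 - t) k t
      have e3 : k - t + t = k := sub_add_cancel k t
      simpa only [e1, e2, e3] using this
    have hk : k = j ∨ (∃ n : Fin 3, j = n + 1 ∧ k = n + 2) ∨ (∃ n : Fin 3, k = n + 1 ∧ j = n + 2) := by
      revert j k; decide
    rcases hk with rfl | ⟨n, rfl, rfl⟩ | ⟨n, rfl, rfl⟩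
    · rw [hsd]; ring
    · exact hcyc n
    · rw [hsk, ← hcyc n]; ring
  · have e1 : t - t = 0 := sub_self t
    have e2 : t + 1 - t = 1 := (by decide : ∀ t : Fin 3, t + 1 - t = 1) t
    simpa only [e1, e2] using h3

end CKaux

end


noncomputable section

namespace CKaux

open Filter Topology

lemma pd_congr_hyp {f g : (Fin 3 → ℝ) → ℝ} {p : Fin 3 → ℝ} {τ j : Fin 3} (hj : j ≠ τ)
    (hf : AnalyticAt ℝ f p) (hg : AnalyticAt ℝ g p)
    (h : ∀ᶠ u in 𝓝 p, u τ = p τ → f u = g u) :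
    ∀ᶠ u in 𝓝 p, u τ = p τ → pd j f u = pd j g u := by
  filter_upwards [hf.eventually_analyticAt, hg.eventually_analyticAt,
    eventually_eventually_nhds.2 h] with u hfu hgu hu huτ
  apply pd_eq_of_line hfu.differentiableAt
  have h1 : HasDerivAt (fun s : ℝ => g (u + s • Pi.single j (1 : ℝ))) (pd j g u) 0 :=
    hgu.differentiableAt.hasFDerivAt.hasLineDerivAt (Pi.single j (1 : ℝ))
  refine h1.congr_of_eventuallyEq ?_
  have hc : Tendsto (fun s : ℝ => u + s • (Pi.single j (1 : ℝ) : Fin 3 → ℝ)) (𝓝 0) (𝓝 u) := by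
    have : Continuous (fun s : ℝ => u + s • (Pi.single j (1 : ℝ) : Fin 3 → ℝ)) := by fun_prop
    simpa using this.tendsto 0
  filter_upwards [hc.eventually hu] with s hs
  exact hs (by simp [huτ, hj.symm])

lemma propagate {f : (Fin 3 → ℝ) → ℝ} {p : Fin 3 → ℝ} {τ : Fin 3}
    (hf : AnalyticAt ℝ f p) (hd : ∀ᶠ u in 𝓝 p, pd τ f u = 0)
    (h : ∀ᶠ u in 𝓝 p, u τ = p τ → f u = 0) : ∀ᶠ u in 𝓝 p, f u = 0 := by
  obtain ⟨r, hr, H⟩ := Metric.eventually_nhds_iff_ball.1 (hf.eventually_analyticAt.and (hd.and h))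
  filter_upwards [Metric.ball_mem_nhds p hr] with u hu
  set w : Fin 3 → ℝ := Function.update u τ (p τ) with hw
  set e : Fin 3 → ℝ := Pi.single τ (1 : ℝ) with he
  have hwb : w ∈ Metric.ball p r := by
    rw [Metric.mem_ball, dist_pi_lt_iff hr] at hu ⊢
    intro i
    by_cases hi : i = τ
    · subst hi; simpa [hw] using hr
    · simpa [hw, hi] using hu i
  have hwu : w + (u τ - p τ) • e = u := by
    ext i
    by_cases hi : i = τ
    · subst hi; simp [hw, he]
    · simp [hw, he, hi]
  let S : Set ℝ := (fun s : ℝ => w + s • e) ⁻¹' Metric.ball p r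
  have hcont : Continuous (fun s : ℝ => w + s • e) := by fun_prop
  have hSo : IsOpen S := Metric.isOpen_ball.preimage hcont
  have hSc : Convex ℝ S := by
    intro s hs t ht a b ha hb hab
    have := convex_ball p r hs ht ha hb hab
    change w + (a • s + b • t) • e ∈ Metric.ball p r
    convert this using 1
    have : w = (a + b) • w := by rw [hab, one_smul]
    conv_lhs => rw [this]
    simp only [smul_eq_mul]
    module
  have hder : ∀ s ∈ S, HasDerivAt (fun s : ℝ => f (w + s • e)) 0 s := by
    intro s hs
    have h1 := (H _ hs).1.differentiableAt.hasFDerivAt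
    have h2 : HasDerivAt (fun s : ℝ => w + s • e) e s := by
      simpa using ((hasDerivAt_id s).smul_const e).const_add w
    have h3 := h1.comp_hasDerivAt s h2
    have h4 : fderiv ℝ f (w + s • e) e = 0 := (H _ hs).2.1
    rw [h4] at h3
    exact h3
  have h0S : (0 : ℝ) ∈ S := by simpa [S] using hwb
  have h1S : u τ - p τ ∈ S := by
    change w + (u τ - p τ) • e ∈ Metric.ball p r
    rw [hwu]; exact hu
  have := hSo.is_const_of_deriv_eq_zero hSc.isPreconnected
    (f := fun s : ℝ => f (w + s • e))
    (fun s hs => (hder s hs).differentiableAt.differentiableWithinAt)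
    (fun s hs => (hder s hs).deriv) h1S h0S
  simp only [hwu, zero_smul, add_zero] at this
  rw [this]
  exact (H w hwb).2.2 (by simp [hw])

lemma pd_symm {f : (Fin 3 → ℝ) → ℝ} {u : Fin 3 → ℝ} (hf : AnalyticAt ℝ f u) (j k : Fin 3) :
    pd j (pd k f) u = pd k (pd j f) u := by
  have hs : IsSymmSndFDerivAt ℝ f u := (hf.contDiffAt (n := ⊤)).isSymmSndFDerivAt_of_omega
  have hd : DifferentiableAt ℝ (fderiv ℝ f) u := hf.fderiv.differentiableAt
  have key : ∀ j k : Fin 3, pd j (pd k f) u =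
      fderiv ℝ (fderiv ℝ f) u (Pi.single j 1) (Pi.single k 1) := by
    intro j k
    have h1 := hd.hasFDerivAt.clm_apply (hasFDerivAt_const (Pi.single k (1 : ℝ) : Fin 3 → ℝ) u)
    have h2 : fderiv ℝ (pd k f) u = _ := h1.fderiv
    unfold pd at h2 ⊢
    rw [h2]
    simp
  rw [key, key]
  exact hs _ _

lemma pd_mul {f g : (Fin 3 → ℝ) → ℝ} {u : Fin 3 → ℝ} (hf : AnalyticAt ℝ f u)
    (hg : AnalyticAt ℝ g u) (j : Fin 3) :
    pd j (fun v => f v * g v) u = pd j f u * g u + f u * pd j g u := by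
  unfold pd
  rw [fderiv_fun_mul hf.differentiableAt hg.differentiableAt]
  simp
  ring

lemma pd_sub {f g : (Fin 3 → ℝ) → ℝ} {u : Fin 3 → ℝ} (hf : AnalyticAt ℝ f u)
    (hg : AnalyticAt ℝ g u) (j : Fin 3) :
    pd j (fun v => f v - g v) u = pd j f u - pd j g u := by
  unfold pd
  rw [fderiv_fun_sub hf.differentiableAt hg.differentiableAt]
  simp

lemma pd_sum {f : Fin 3 → (Fin 3 → ℝ) → ℝ} {u : Fin 3 → ℝ} (hf : ∀ l, AnalyticAt ℝ (f l) u)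
    (j : Fin 3) : pd j (fun v => ∑ l, f l v) u = ∑ l, pd j (f l) u := by
  unfold pd
  rw [fderiv_fun_sum (fun l _ => (hf l).differentiableAt)]
  simp

lemma pd_congr {f g : (Fin 3 → ℝ) → ℝ} {u : Fin 3 → ℝ} (h : ∀ᶠ v in 𝓝 u, f v = g v)
    (j : Fin 3) : pd j f u = pd j g u := by
  unfold pd
  rw [Filter.EventuallyEq.fderiv_eq h]

lemma pd_cst (c : ℝ) (u : Fin 3 → ℝ) (j : Fin 3) : pd j (fun _ => c) u = 0 := by
  unfold pd; simp

/-- The 2-form `Σ_l da_l ∧ dx_l`, components. -/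
def FF (a x : Fin 3 → (Fin 3 → ℝ) → ℝ) (j k : Fin 3) (u : Fin 3 → ℝ) : ℝ :=
  ∑ l, (pd j (a l) u * pd k (x l) u - pd k (a l) u * pd j (x l) u)

lemma analyticAt_FF {a x : Fin 3 → (Fin 3 → ℝ) → ℝ} {u : Fin 3 → ℝ}
    (ha : ∀ l, AnalyticAt ℝ (a l) u) (hx : ∀ l, AnalyticAt ℝ (x l) u) (j k : Fin 3) :
    AnalyticAt ℝ (FF a x j k) u := by
  apply Finset.analyticAt_fun_sum
  intro l _
  exact ((analyticAt_pd (ha l) j).mul (analyticAt_pd (hx l) k)).sub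
    ((analyticAt_pd (ha l) k).mul (analyticAt_pd (hx l) j))

lemma pd_FF {a x : Fin 3 → (Fin 3 → ℝ) → ℝ} {u : Fin 3 → ℝ}
    (ha : ∀ l, AnalyticAt ℝ (a l) u) (hx : ∀ l, AnalyticAt ℝ (x l) u) (j k m : Fin 3) :
    pd m (FF a x j k) u = ∑ l, (pd m (pd j (a l)) u * pd k (x l) u + pd j (a l) u * pd m (pd k (x l)) u
      - (pd m (pd k (a l)) u * pd j (x l) u + pd k (a l) u * pd m (pd j (x l)) u)) := by
  have hA := fun l j => analyticAt_pd (ha l) j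
  have hX := fun l j => analyticAt_pd (hx l) j
  have : FF a x j k = fun v => ∑ l, (pd j (a l) v * pd k (x l) v - pd k (a l) v * pd j (x l) v) := rfl
  rw [this, pd_sum (fun l => ((hA l j).fun_mul (hX l k)).fun_sub ((hA l k).fun_mul (hX l j)))]
  refine Finset.sum_congr rfl fun l _ => ?_
  rw [pd_sub ((hA l j).fun_mul (hX l k)) ((hA l k).fun_mul (hX l j)), pd_mul (hA l j) (hX l k),
    pd_mul (hA l k) (hX l j)]

lemma dFF {a x : Fin 3 → (Fin 3 → ℝ) → ℝ} {u : Fin 3 → ℝ}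
    (ha : ∀ l, AnalyticAt ℝ (a l) u) (hx : ∀ l, AnalyticAt ℝ (x l) u) (b c d : Fin 3) :
    pd b (FF a x c d) u - pd c (FF a x b d) u + pd d (FF a x b c) u = 0 := by
  rw [pd_FF ha hx, pd_FF ha hx, pd_FF ha hx, ← Finset.sum_sub_distrib, ← Finset.sum_add_distrib]
  apply Finset.sum_eq_zero
  intro l _
  rw [pd_symm (ha l) c b, pd_symm (ha l) d b, pd_symm (ha l) d c,
    pd_symm (hx l) c b, pd_symm (hx l) d b, pd_symm (hx l) d c]
  ring

end CKaux
end


noncomputable section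

namespace CKaux

open Filter Topology

/-- One propagation of orthogonality. -/
lemma orth_step {a a0 : Fin 3 → Fin 3 → (Fin 3 → ℝ) → ℝ} {p : Fin 3 → ℝ} {τ : Fin 3}
    (ha : ∀ l i, AnalyticAt ℝ (a l i) p)
    (h0 : ∀ᶠ u in 𝓝 p, u τ = p τ → ∀ l i, a l i u = a0 l i u)
    (hd : ∀ᶠ u in 𝓝 p, ∀ i k, ∑ l, (pd τ (a l i) u * a l k u + a l i u * pd τ (a l k) u) = 0)
    (ho : ∀ᶠ u in 𝓝 p, ∀ i k, ∑ l, a0 l i u * a0 l k u = if i = k then 1 else 0) :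
    ∀ᶠ u in 𝓝 p, ∀ i k, ∑ l, a l i u * a l k u = if i = k then 1 else 0 := by
  rw [eventually_all]; intro i
  rw [eventually_all]; intro k
  have hA : ∀ u, (∀ l i, AnalyticAt ℝ (a l i) u) → AnalyticAt ℝ (fun v => ∑ l, a l i v * a l k v) u := by
    intro u hu
    exact Finset.analyticAt_fun_sum _ (fun l _ => (hu l i).fun_mul (hu l k))
  have hev : ∀ᶠ u in 𝓝 p, ∀ l i, AnalyticAt ℝ (a l i) u := by
    rw [eventually_all]; intro l
    rw [eventually_all]; intro i
    exact (ha l i).eventually_analyticAt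
  have := propagate (f := fun u => (∑ l, a l i u * a l k u) - if i = k then 1 else 0) (τ := τ)
    ((hA p ha).fun_sub analyticAt_const) ?_ ?_
  · filter_upwards [this] with u hu
    linarith
  · filter_upwards [hev, hd] with u hu hdu
    rw [pd_sub (hA u hu) analyticAt_const, pd_cst, sub_zero,
      pd_sum (fun l => (hu l i).fun_mul (hu l k)), ← hdu i k]
    exact Finset.sum_congr rfl fun l _ => pd_mul (hu l i) (hu l k) τ
  · filter_upwards [h0, ho] with u hu hou huτ
    simp only [hu huτ]
    linarith [hou i k]

theorem core (b c d : Fin 3) (hbc : b ≠ c) (hbd : b ≠ d) (hcd : c ≠ d) (p : Fin 3 → ℝ)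
    (Ω : Fin 3 → Fin 3 → Fin 3 → (Fin 3 → ℝ) → ℝ)
    (hΩ : ∀ i j k : Fin 3, AnalyticAt ℝ (Ω i j k) p)
    (hcl : ∀ᶠ u in 𝓝 p, ∀ i, pd b (Ω i c d) u - pd c (Ω i b d) u + pd d (Ω i b c) u = 0)
    (θ ω : Fin 3 → Fin 3 → ℝ)
    (hbase : ∀ i j k, cr (θ j) (ω k) i - cr (θ k) (ω j) i = Ω i j k p)
    (hsurj : ∀ g0 g1 : Fin 3 → ℝ, ∃ α β : Fin 3 → ℝ, (∀ i, cr (θ b) β i - cr α (ω b) i = g0 i) ∧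
      (∀ i, cr (θ c) β i - cr α (ω c) i = g1 i)) :
    ∃ (a : Fin 3 → Fin 3 → (Fin 3 → ℝ) → ℝ) (x : Fin 3 → (Fin 3 → ℝ) → ℝ),
      (∀ l i, AnalyticAt ℝ (a l i) p) ∧ (∀ l, AnalyticAt ℝ (x l) p) ∧
      (∀ l i, a l i p = if l = i then 1 else 0) ∧
      (∀ l, pd b (x l) p = ω b l) ∧ (∀ l, pd c (x l) p = ω c l) ∧ (∀ l, pd d (x l) p = ω d l) ∧
      (∀ᶠ u in 𝓝 p, ∀ i k, ∑ l, a l i u * a l k u = if i = k then 1 else 0) ∧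
      (∀ᶠ u in 𝓝 p, ∀ i, FF (fun l => a l i) x b c u = Ω i b c u ∧
        FF (fun l => a l i) x b d u = Ω i b d u ∧ FF (fun l => a l i) x c d u = Ω i c d u) := by
  -- step 1
  have S1 := step b p 0 Fin.elim0 (fun r => r.elim0) (fun l i _ => if l = i then 1 else 0)
    (fun _ _ => 0) (fun _ _ => analyticAt_const) (fun _ => analyticAt_const) (fun _ _ => rfl)
    θ ω (fun r => r.elim0) (fun r => r.elim0) Ω hΩ (fun _ r => r.elim0)
    (fun g => ⟨0, 0, fun r => r.elim0⟩)
  obtain ⟨a1, x1, ha1, hx1, ia1, ix1, da1, dx1, o1, -⟩ := S1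
  have ap1 : ∀ l i, a1 l i p = if l = i then 1 else 0 := fun l i => ia1.self_of_nhds rfl l i
  have or1 := orth_step ha1 ia1 o1 (Eventually.of_forall fun u i k => by
    simp [eq_comm])
  -- step 2
  have S2 := step c p 1 (fun _ => b) (fun _ => hbc) a1 x1 ha1 hx1 ap1 θ ω (fun _ => da1)
    (fun _ => dx1) Ω hΩ (fun i _ => hbase i b c) (fun g => by
      obtain ⟨α, β, h, -⟩ := hsurj (g 0) 0
      exact ⟨α, β, fun r i => by rw [h i, Subsingleton.elim r 0]⟩)
  obtain ⟨a2, x2, ha2, hx2, ia2, ix2, da2, dx2, o2, e2⟩ := S2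
  have ap2 : ∀ l i, a2 l i p = if l = i then 1 else 0 := fun l i => by
    rw [ia2.self_of_nhds rfl l i, ap1]
  have or2 := orth_step ha2 ia2 o2 or1
  have dba2 : ∀ l i, pd b (a2 l i) p = crossMat (θ b) l i := fun l i => by
    rw [← da1, (pd_congr_hyp hbc (ha2 l i) (ha1 l i)
      (ia2.mono fun u hu h => hu h l i)).self_of_nhds rfl]
  have dbx2 : ∀ l, pd b (x2 l) p = ω b l := fun l => by
    rw [← dx1, (pd_congr_hyp hbc (hx2 l) (hx1 l)
      (ix2.mono fun u hu h => hu h l)).self_of_nhds rfl]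
  -- step 3
  have S3 := step d p 2 ![b, c] (fun r => by fin_cases r; exacts [hbd, hcd]) a2 x2 ha2 hx2 ap2 θ ω
    (fun r => by fin_cases r; exacts [dba2, da2]) (fun r => by fin_cases r; exacts [dbx2, dx2])
    Ω hΩ (fun i r => by fin_cases r; exacts [hbase i b d, hbase i c d]) (fun g => by
      obtain ⟨α, β, h, h'⟩ := hsurj (g 0) (g 1)
      exact ⟨α, β, fun r i => by fin_cases r; exacts [h i, h' i]⟩)
  obtain ⟨a, x, ha, hx, ia, ix, da, dx, o, e⟩ := S3
  have or3 := orth_step ha ia o or2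
  have tA : ∀ j, j ≠ d → ∀ l i, ∀ᶠ u in 𝓝 p, u d = p d → pd j (a l i) u = pd j (a2 l i) u :=
    fun j hj l i => pd_congr_hyp hj (ha l i) (ha2 l i) (ia.mono fun u hu h => hu h l i)
  have tX : ∀ j, j ≠ d → ∀ l, ∀ᶠ u in 𝓝 p, u d = p d → pd j (x l) u = pd j (x2 l) u :=
    fun j hj l => pd_congr_hyp hj (hx l) (hx2 l) (ix.mono fun u hu h => hu h l)
  have hev : ∀ᶠ u in 𝓝 p, (∀ l i, AnalyticAt ℝ (a l i) u) ∧ (∀ l, AnalyticAt ℝ (x l) u) ∧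
      ∀ i j k, AnalyticAt ℝ (Ω i j k) u := by
    refine Eventually.and ?_ (Eventually.and ?_ ?_)
    · rw [eventually_all]; intro l
      rw [eventually_all]; intro i
      exact (ha l i).eventually_analyticAt
    · rw [eventually_all]; intro l
      exact (hx l).eventually_analyticAt
    · rw [eventually_all]; intro l
      rw [eventually_all]; intro i
      rw [eventually_all]; intro j
      exact (hΩ l i j).eventually_analyticAt
  have ebd : ∀ᶠ u in 𝓝 p, ∀ i, FF (fun l => a l i) x b d u = Ω i b d u :=
    e.mono fun u hu i => hu i 0
  have ecd : ∀ᶠ u in 𝓝 p, ∀ i, FF (fun l => a l i) x c d u = Ω i c d u :=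
    e.mono fun u hu i => hu i 1
  have ebc : ∀ᶠ u in 𝓝 p, ∀ i, FF (fun l => a l i) x b c u = Ω i b c u := by
    rw [eventually_all]; intro i
    have := propagate (f := fun u => FF (fun l => a l i) x b c u - Ω i b c u) (τ := d) (p := p)
      ((analyticAt_FF (fun l => ha l i) hx b c).fun_sub (hΩ i b c)) ?_ ?_
    · filter_upwards [this] with u hu
      linarith
    · filter_upwards [hev, hcl, eventually_eventually_nhds.2 ebd,
        eventually_eventually_nhds.2 ecd] with u hu hcu h1 h2
      rw [pd_sub (analyticAt_FF (fun l => hu.1 l i) hu.2.1 b c) (hu.2.2 i b c)]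
      have h3 := dFF (fun l => hu.1 l i) hu.2.1 b c d
      rw [pd_congr (h1.mono fun v hv => hv i), pd_congr (h2.mono fun v hv => hv i)] at h3
      linarith [hcu i]
    · have tA1 := eventually_all.2 fun l => tA b hbd l i
      have tA2 := eventually_all.2 fun l => tA c hcd l i
      have tX1 := eventually_all.2 fun l => tX b hbd l
      have tX2 := eventually_all.2 fun l => tX c hcd l
      filter_upwards [tA1, tA2, tX1, tX2, e2] with u h1 h2 h3 h4 h5 hud
      rw [← h5 i 0]
      unfold FF
      rw [sub_eq_zero]
      refine Finset.sum_congr rfl fun l _ => ?_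
      rw [h1 l hud, h2 l hud, h3 l hud, h4 l hud]
  refine ⟨a, x, ha, hx, fun l i => by rw [ia.self_of_nhds rfl l i, ap2], ?_, ?_, dx, or3, ?_⟩
  · intro l; rw [(tX b hbd l).self_of_nhds rfl, dbx2]
  · intro l; rw [(tX c hcd l).self_of_nhds rfl, dx2]
  · filter_upwards [ebc, ebd, ecd] with u h1 h2 h3 i
    exact ⟨h1 i, h2 i, h3 i⟩

end CKaux
end

/-- local existence of a real-analytic coframing ω with dω = Ω and flat
metric g = ᵗω∘ω, near a point p where Ω is nondegenerate (Theorem 3.1 of the paper). -/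
theorem flat_metric_with_prescribed_derived_coframing_nondegenerate
    (M : Set (Fin 3 → ℝ)) (hM : IsOpen M) (p : Fin 3 → ℝ) (hp : p ∈ M)
    (Ω : Fin 3 → Fin 3 → Fin 3 → (Fin 3 → ℝ) → ℝ)
    (hanal : ∀ i j k : Fin 3, AnalyticOnNhd ℝ (Ω i j k) M)
    (hskew : ∀ i j k : Fin 3, ∀ u ∈ M, Ω i j k u = -Ω i k j u)
    (hclosed : ∀ i : Fin 3, ∀ u ∈ M,
      pd 0 (Ω i 1 2) u + pd 1 (Ω i 2 0) u + pd 2 (Ω i 0 1) u = 0)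
    (hnondeg : ∀ v : Fin 3 → ℝ, v ≠ 0 → ∃ i k : Fin 3, (∑ j, Ω i j k p * v j) ≠ 0) :
    ∃ U : Set (Fin 3 → ℝ), IsOpen U ∧ p ∈ U ∧ U ⊆ M ∧
      ∃ (x : (Fin 3 → ℝ) → (Fin 3 → ℝ)) (a : (Fin 3 → ℝ) → Matrix (Fin 3) (Fin 3) ℝ),
        AnalyticOnNhd ℝ x U ∧
        (∀ u ∈ U, IsUnit (jacobian x u).det) ∧
        (∀ i k : Fin 3, AnalyticOnNhd ℝ (fun u => a u i k) U) ∧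
        (∀ u ∈ U, a u ∈ SO3) ∧
        (∀ i j k : Fin 3, ∀ u ∈ U,
          pd j (fun v => Wmat a x v i k) u - pd k (fun v => Wmat a x v i j) u
            = Ω i j k u) := by
  have hMn : ∀ᶠ u in nhds p, u ∈ M := hM.mem_nhds hp
  obtain ⟨t, θ, ω, hdt, hbase, hsurj⟩ := CKaux.exists_alg (fun i j k => Ω i j k p)
    (fun i j k => hskew i j k p hp) hnondeg
  have H := CKaux.core t (t + 1) (t + 2) ((by decide : ∀ t : Fin 3, t ≠ t + 1) t)
    ((by decide : ∀ t : Fin 3, t ≠ t + 2) t) ((by decide : ∀ t : Fin 3, t + 1 ≠ t + 2) t) p Ω (fun i j k => hanal i j k p hp) ?_ θ ω hbase hsurj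
  swap
  · filter_upwards [eventually_eventually_nhds.2 hMn] with u hu i
    have hs : pd (t + 1) (Ω i t (t + 2)) u = - pd (t + 1) (Ω i (t + 2) t) u := by
      have h1 : pd (t + 1) (Ω i t (t + 2)) u = pd (t + 1) (fun v => 0 - Ω i (t + 2) t v) u :=
        CKaux.pd_congr (hu.mono fun v hv => by rw [hskew i _ _ v hv, zero_sub]) _
      rw [h1, CKaux.pd_sub analyticAt_const (hanal i _ _ u hu.self_of_nhds), CKaux.pd_cst, zero_sub]
    have hc := hclosed i u hu.self_of_nhds
    have hcyc : pd t (Ω i (t + 1) (t + 2)) u + pd (t + 1) (Ω i (t + 2) t) u +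
        pd (t + 2) (Ω i t (t + 1)) u = 0 := by
      clear hs hbase hsurj
      fin_cases t
      · exact hc
      · change pd 1 (Ω i 2 0) u + pd 2 (Ω i 0 1) u + pd 0 (Ω i 1 2) u = 0
        linarith
      · change pd 2 (Ω i 0 1) u + pd 0 (Ω i 1 2) u + pd 1 (Ω i 2 0) u = 0
        linarith
    rw [hs]; linarith
  obtain ⟨a, x, ha, hx, hap, xb, xc, xd, hor, hF⟩ := H
  have hcov : ∀ t j : Fin 3, j = t ∨ j = t + 1 ∨ j = t + 2 := by decide
  have hxp : ∀ j l, pd j (x l) p = ω j l := by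
    intro j l
    rcases hcov t j with rfl | rfl | rfl
    exacts [xb l, xc l, xd l]
  -- analyticity near p
  have hev : ∀ᶠ u in nhds p, (∀ l i, AnalyticAt ℝ (a l i) u) ∧ (∀ l, AnalyticAt ℝ (x l) u) := by
    refine Filter.Eventually.and ?_ ?_
    · rw [Filter.eventually_all]; intro l
      rw [Filter.eventually_all]; intro i
      exact (ha l i).eventually_analyticAt
    · rw [Filter.eventually_all]; intro l
      exact (hx l).eventually_analyticAt
  let A : (Fin 3 → ℝ) → Matrix (Fin 3) (Fin 3) ℝ := fun u => Matrix.of fun l i => a l i u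
  let X : (Fin 3 → ℝ) → (Fin 3 → ℝ) := fun u l => x l u
  let J : (Fin 3 → ℝ) → Matrix (Fin 3) (Fin 3) ℝ := fun u => Matrix.of fun l j => pd j (x l) u
  have hAdet : ∀ᶠ u in nhds p, 0 < (A u).det := by
    have hc : ContinuousAt (fun u => (A u).det) p := by
      have h : ∀ l i, ContinuousAt (a l i) p := fun l i => (ha l i).continuousAt
      simp only [A, Matrix.det_fin_three, Matrix.of_apply]
      fun_prop
    have h1 : (A p).det = 1 := by
      have : A p = 1 := by
        ext l i; simp [A, hap, Matrix.one_apply]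
      rw [this, Matrix.det_one]
    exact hc.eventually (lt_mem_nhds (by simp only [h1]; exact one_pos))
  have hJdet : ∀ᶠ u in nhds p, (J u).det ≠ 0 := by
    have hc : ContinuousAt (fun u => (J u).det) p := by
      have h : ∀ l j, ContinuousAt (pd j (x l)) p :=
        fun l j => (CKaux.analyticAt_pd (hx l) j).continuousAt
      simp only [J, Matrix.det_fin_three, Matrix.of_apply]
      fun_prop
    have h1 : (J p).det = CKaux.dt3 ω := by
      simp only [J, Matrix.det_fin_three, Matrix.of_apply, hxp, CKaux.dt3, CKaux.dt, CKaux.cr0,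
        CKaux.cr1, CKaux.cr2]
      ring
    exact hc.eventually_ne (by rw [h1]; exact hdt)
  obtain ⟨U, hU, hUo, hpU⟩ := eventually_nhds_iff.1
    (hMn.and (hev.and (hor.and (hF.and (hAdet.and hJdet)))))
  have hjac : ∀ u ∈ U, jacobian X u = J u := by
    intro u hu
    ext l j
    simp only [jacobian, J, Matrix.of_apply, pd, X]
    rw [fderiv_pi (fun l => ((hU u hu).2.1.2 l).differentiableAt)]
    rfl
  have hAA : ∀ u ∈ U, (A u)ᵀ * A u = 1 := by
    intro u hu
    ext i k
    rw [Matrix.mul_apply, Matrix.one_apply, ← (hU u hu).2.2.1 i k]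
    rfl
  have hW : ∀ u ∈ U, ∀ i k, Wmat A X u i k = ∑ l, a l i u * pd k (x l) u := by
    intro u hu i k
    rw [Wmat, hjac u hu, Matrix.inv_eq_left_inv (hAA u hu), Matrix.mul_apply]
    rfl
  refine ⟨U, hUo, hpU, fun u hu => (hU u hu).1, X, A, ?_, ?_, ?_, ?_, ?_⟩
  · intro u hu
    exact AnalyticAt.pi (fun l => (hU u hu).2.1.2 l)
  · intro u hu
    rw [hjac u hu, isUnit_iff_ne_zero]
    exact (hU u hu).2.2.2.2.2
  · intro i k u hu
    exact (hU u hu).2.1.1 i k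
  · intro u hu
    refine ⟨hAA u hu, ?_⟩
    have h1 := congrArg Matrix.det (hAA u hu)
    rw [Matrix.det_mul, Matrix.det_transpose, Matrix.det_one] at h1
    have h2 := (hU u hu).2.2.2.2.1
    nlinarith
  · intro i j k u hu
    have hFF : ∀ j k, CKaux.FF (fun l => a l i) x j k u = Ω i j k u := by
      have hsF : ∀ j k, CKaux.FF (fun l => a l i) x j k u = - CKaux.FF (fun l => a l i) x k j u := by
        intro j k
        unfold CKaux.FF
        rw [← Finset.sum_neg_distrib]
        exact Finset.sum_congr rfl fun l _ => by ring
      have hsO := fun j k => hskew i j k u (hU u hu).1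
      obtain ⟨f1, f2, f3⟩ := (hU u hu).2.2.2.1 i
      intro j k
      have s1 := hsF j k
      have s2 := hsO j k
      rcases hcov t j with h | h | h <;> rcases hcov t k with h' | h' | h' <;>
        rw [h, h'] at s1 s2 ⊢ <;> linarith
    have hpdW : ∀ j k, pd j (fun v => Wmat A X v i k) u =
        ∑ l, (pd j (a l i) u * pd k (x l) u + a l i u * pd j (pd k (x l)) u) := by
      intro j k
      have ha' := fun l => (hU u hu).2.1.1 l i
      have hx' := fun l => CKaux.analyticAt_pd ((hU u hu).2.1.2 l) k
      rw [CKaux.pd_congr (Filter.eventually_of_mem (hUo.mem_nhds hu) fun v hv => hW v hv i k),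
        CKaux.pd_sum (fun l => (ha' l).fun_mul (hx' l))]
      exact Finset.sum_congr rfl fun l _ => CKaux.pd_mul (ha' l) (hx' l) j
    rw [hpdW, hpdW, ← hFF j k, ← Finset.sum_sub_distrib]
    refine Finset.sum_congr rfl fun l _ => ?_
    rw [CKaux.pd_symm ((hU u hu).2.1.2 l) k j]
    ring
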